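/- Let s ∈ ℝ be such that no element of 𝔖 has real part equal to s. Then there exists a constant C < ∞ such that for every γ ∈ ℝ, writing ζ = s + iγ, and for all C^∞ functions f, φ, ψ : I → ℂ satisfying (H_ζ f)(x) = φ(x) + ψ′(x) for all x ∈ I, one has ‖f‖_{L²(I)} + ⟨ζ⟩^{−1}·‖f′‖_{L²(I)} ≤ C·⟨ζ⟩^{−1/2}·(|f(−r)| + |f(r)|) + C·⟨ζ⟩^{−2}·‖φ‖_{L²(I)} + C·⟨ζ⟩^{−1}·‖ψ‖_{L²(I)}. -/

import Mathlib

open MeasureTheory Set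

/-- The ordinary differential operator `H_ζ` acting on functions on `ℝ`:
`(H_ζ f)(x) = f″(x) + (β₁(x)+β₂(x))·f′(x)
  + (ζ²·a(x)² − iζ·a′(x) + iζ·a(x)·(β₁(x)−β₂(x)) + β₃(x))·f(x)`. -/
noncomputable def Hop (a : ℝ → ℝ) (β₁ β₂ β₃ : ℝ → ℂ) (ζ : ℂ) (f : ℝ → ℂ) (x : ℝ) : ℂ :=
  deriv (deriv f) x + (β₁ x + β₂ x) * deriv f x +
    (ζ ^ 2 * (Complex.ofReal (a x)) ^ 2 - Complex.I * ζ * Complex.ofReal (deriv a x)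
      + Complex.I * ζ * Complex.ofReal (a x) * (β₁ x - β₂ x) + β₃ x) * f x

/-- The `L²` norm of `f` over the set `J ⊆ ℝ` (w.r.t. Lebesgue measure). -/
noncomputable def L2 (f : ℝ → ℂ) (J : Set ℝ) : ℝ := (∫ x in J, ‖f x‖ ^ 2) ^ ((1 : ℝ)/2)

/-- The set `𝔖` of `ζ ∈ ℂ` for which the Dirichlet problem `H_ζ g = 0` on `I = [-r,r]`,
`g(-r) = g(r) = 0`, has a nontrivial solution. -/
def frakS (r : ℝ) (a : ℝ → ℝ) (β₁ β₂ β₃ : ℝ → ℂ) : Set ℂ :=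
  {ζ : ℂ | ∃ g : ℝ → ℂ, ContDiff ℝ 2 g ∧ (∃ x ∈ Icc (-r) r, g x ≠ 0) ∧
    (∀ x ∈ Icc (-r) r, Hop a β₁ β₂ β₃ ζ g x = 0) ∧ g (-r) = 0 ∧ g r = 0}

/-!
On a vertical strip `ζ² a²` is `-⟨ζ⟩² a²` up to a term of size `⟨ζ⟩`, so for large `⟨ζ⟩` the
operator `H_ζ` is coercive: pairing `H_ζ g` with `g` controls `⟨ζ⟩² ‖g‖² + ‖g'‖²` when `g` vanishes
at the endpoints. Boundary values are carried by a combination of `sinh (⟨ζ⟩ (r ± x))`, whose energy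
is of size `⟨ζ⟩`, and the remaining part of `f` is treated by coercivity.

For bounded `ζ` the equation is a first order system for `(f, f' - ψ)`. Being outside `𝔖` says that
the solution shot from `-r` with data `(0, 1)` does not vanish at `r`; as the system depends
continuously on `ζ`, this holds uniformly on compact sets of `ζ`, where Grönwall's inequality then
gives the estimate.
-/

section CauchyLipschitz

variable {E : Type*} [NormedAddCommGroup E] [NormedSpace ℝ E]

/-- The Bielecki weight `exp (2 |∫_{t₀}^t k|)`: in the sup norm with this weight, Picard's operator
for a vector field with Lipschitz constant `k t` at time `t` is a contraction on the whole line. -/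
noncomputable def bieleckiWeight (k : ℝ → ℝ) (t₀ t : ℝ) : ℝ :=
  Real.exp (2 * |∫ s in t₀..t, k s|)

lemma one_le_bieleckiWeight (k : ℝ → ℝ) (t₀ t : ℝ) : 1 ≤ bieleckiWeight k t₀ t :=
  Real.one_le_exp (by positivity)

lemma bieleckiWeight_pos (k : ℝ → ℝ) (t₀ t : ℝ) : 0 < bieleckiWeight k t₀ t :=
  Real.exp_pos _

lemma continuous_bieleckiWeight {k : ℝ → ℝ} (hk : Continuous k) (t₀ : ℝ) :
    Continuous (bieleckiWeight k t₀) := by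
  have := intervalIntegral.continuous_primitive (μ := volume)
    (fun a b => hk.intervalIntegrable a b) t₀
  unfold bieleckiWeight
  fun_prop

lemma abs_integral_exp_two_mul_abs_le (u : ℝ) :
    |∫ s in (0 : ℝ)..u, Real.exp (2 * |s|)| ≤ Real.exp (2 * |u|) / 2 := by
  have nonneg_case : ∀ v : ℝ, 0 ≤ v →
      |∫ s in (0 : ℝ)..v, Real.exp (2 * |s|)| ≤ Real.exp (2 * |v|) / 2 := by
    intro v hv
    have hcongr : ∫ s in (0 : ℝ)..v, Real.exp (2 * |s|) = ∫ s in (0 : ℝ)..v, Real.exp (2 * s) :=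
      intervalIntegral.integral_congr fun s hs => by
        rw [uIcc_of_le hv] at hs
        simp only [abs_of_nonneg hs.1]
    have hvalue : ∫ s in (0 : ℝ)..v, Real.exp (2 * s) = (Real.exp (2 * v) - 1) / 2 := by
      rw [intervalIntegral.integral_comp_mul_left Real.exp two_ne_zero, integral_exp]
      simp only [mul_zero, Real.exp_zero, smul_eq_mul]
      ring
    have hexp : 1 ≤ Real.exp (2 * v) := Real.one_le_exp (by positivity)
    rw [hcongr, hvalue, abs_of_nonneg hv, abs_of_nonneg (by linarith)]
    linarith
  rcases le_total 0 u with hu | hu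
  · exact nonneg_case u hu
  · have hreflect := intervalIntegral.integral_comp_neg (a := 0) (b := -u)
      fun s : ℝ => Real.exp (2 * |s|)
    simp only [abs_neg, neg_neg, neg_zero] at hreflect
    rw [intervalIntegral.integral_symm, ← hreflect, abs_neg, ← abs_neg u]
    exact nonneg_case (-u) (neg_nonneg.mpr hu)

lemma abs_integral_mul_bieleckiWeight_le {k : ℝ → ℝ} (hk : Continuous k) (t₀ t : ℝ) :
    |∫ s in t₀..t, k s * bieleckiWeight k t₀ s| ≤ bieleckiWeight k t₀ t / 2 := by
  have hsubst := intervalIntegral.integral_comp_mul_deriv (a := t₀) (b := t)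
    (g := fun u => Real.exp (2 * |u|))
    (fun s _ => (hk.integral_hasStrictDerivAt t₀ s).hasDerivAt) hk.continuousOn (by fun_prop)
  simp only [Function.comp_apply, intervalIntegral.integral_same] at hsubst
  simp only [bieleckiWeight, mul_comm (k _), hsubst]
  exact abs_integral_exp_two_mul_abs_le _

lemma norm_integral_le_of_norm_le_bieleckiWeight {k : ℝ → ℝ} (hk : Continuous k) {t₀ D : ℝ}
    (hD : 0 ≤ D) {v : ℝ → E} (hv : ∀ s, ‖v s‖ ≤ D * (k s * bieleckiWeight k t₀ s)) (t : ℝ) :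
    ‖∫ s in t₀..t, v s‖ ≤ D / 2 * bieleckiWeight k t₀ t := by
  have hint : IntervalIntegrable (fun s => D * (k s * bieleckiWeight k t₀ s)) volume t₀ t :=
    (continuous_const.mul (hk.mul (continuous_bieleckiWeight hk t₀))).intervalIntegrable _ _
  calc ‖∫ s in t₀..t, v s‖
      ≤ |∫ s in t₀..t, D * (k s * bieleckiWeight k t₀ s)| :=
        intervalIntegral.norm_integral_le_abs_of_norm_le (.of_forall fun s => hv s) hint
    _ = D * |∫ s in t₀..t, k s * bieleckiWeight k t₀ s| := by
        rw [intervalIntegral.integral_const_mul, abs_mul, abs_of_nonneg hD]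
    _ ≤ D * (bieleckiWeight k t₀ t / 2) := by
        gcongr
        exact abs_integral_mul_bieleckiWeight_le hk t₀ t
    _ = D / 2 * bieleckiWeight k t₀ t := by ring

variable [CompleteSpace E]

open scoped BoundedContinuousFunction in
lemma exists_boundedContinuousFunction_eq_integral {k : ℝ → ℝ} (hk : Continuous k) (t₀ : ℝ)
    {V : (ℝ →ᵇ E) → ℝ → E} (hV : ∀ w, Continuous (V w))
    (hV_zero : ∀ s, ‖V 0 s‖ ≤ k s * bieleckiWeight k t₀ s)
    (hV_sub : ∀ w w' s, ‖V w s - V w' s‖ ≤ ‖w - w'‖ * (k s * bieleckiWeight k t₀ s)) :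
    ∃ w : ℝ →ᵇ E, ∀ t, bieleckiWeight k t₀ t • w t = ∫ s in t₀..t, V w s := by
  set e := bieleckiWeight k t₀
  have he : Continuous e := continuous_bieleckiWeight hk t₀
  have he_pos : ∀ t, 0 < e t := bieleckiWeight_pos k t₀
  have norm_average_le {v : ℝ → E} {D : ℝ} (hD : 0 ≤ D) (hv : ∀ s, ‖v s‖ ≤ D * (k s * e s))
      (t : ℝ) : ‖(e t)⁻¹ • ∫ s in t₀..t, v s‖ ≤ D / 2 := by
    rw [norm_smul, norm_inv, Real.norm_of_nonneg (he_pos t).le, inv_mul_le_iff₀ (he_pos t),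
      mul_comm (e t)]
    exact norm_integral_le_of_norm_le_bieleckiWeight hk hD hv t
  have hV_bound (w s) : ‖V w s‖ ≤ (‖w‖ + 1) * (k s * e s) := by
    have hdiff := hV_sub w 0 s
    rw [sub_zero] at hdiff
    linarith [norm_le_norm_sub_add (V w s) (V 0 s), hV_zero s]
  have hcont (w) : Continuous fun t => (e t)⁻¹ • ∫ s in t₀..t, V w s :=
    (he.inv₀ fun t => (he_pos t).ne').smul
      (intervalIntegral.continuous_primitive (fun a b => (hV w).intervalIntegrable a b) t₀)
  let P (w : ℝ →ᵇ E) : ℝ →ᵇ E :=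
    .ofNormedAddCommGroup _ (hcont w) _ (norm_average_le (by positivity) (hV_bound w))
  have hP : ContractingWith (1 / 2) P := by
    refine ⟨by norm_num, LipschitzWith.of_dist_le_mul fun w w' => ?_⟩
    rw [dist_eq_norm, dist_eq_norm]
    refine BoundedContinuousFunction.norm_le (by positivity) |>.mpr fun t => ?_
    have hsub : (P w - P w') t = (e t)⁻¹ • ∫ s in t₀..t, (V w s - V w' s) := by
      rw [intervalIntegral.integral_sub ((hV w).intervalIntegrable _ _)
        ((hV w').intervalIntegrable _ _), smul_sub]
      rfl
    rw [hsub]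
    refine (norm_average_le (norm_nonneg _) (hV_sub w w') t).trans_eq ?_
    push_cast
    ring
  refine ⟨hP.fixedPoint, fun t => ?_⟩
  conv_lhs => rw [← hP.fixedPoint_isFixedPt]
  exact smul_inv_smul₀ (he_pos t).ne' _

theorem exists_forall_hasDerivAt_of_lipschitz {F : ℝ → E → E} (hF : Continuous (Function.uncurry F))
    {k : ℝ → ℝ} (hk : Continuous k) (hlip : ∀ t x y, ‖F t x - F t y‖ ≤ k t * ‖x - y‖)
    (t₀ : ℝ) (y₀ : E) : ∃ y : ℝ → E, y t₀ = y₀ ∧ ∀ t, HasDerivAt y (F t (y t)) t := by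
  -- Adding `‖F s y₀‖` to the Lipschitz constant makes Picard's operator preserve bounded functions.
  set K : ℝ → ℝ := fun s => |k s| + ‖F s y₀‖
  have hK : Continuous K := by fun_prop
  set e := bieleckiWeight K t₀
  have he : Continuous e := continuous_bieleckiWeight hK t₀
  have he_pos : ∀ t, 0 < e t := bieleckiWeight_pos K t₀
  obtain ⟨w, hw⟩ := exists_boundedContinuousFunction_eq_integral hK t₀
    (V := fun w s => F s (y₀ + e s • w s)) (fun w => by fun_prop)
    (fun s => by
      simp only [BoundedContinuousFunction.coe_zero, Pi.zero_apply, smul_zero, add_zero]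
      calc ‖F s y₀‖ ≤ K s := le_add_of_nonneg_left (abs_nonneg _)
        _ ≤ K s * e s := le_mul_of_one_le_right (by positivity) (one_le_bieleckiWeight K t₀ s))
    (fun w w' s => by
      calc ‖F s (y₀ + e s • w s) - F s (y₀ + e s • w' s)‖
          ≤ k s * ‖(y₀ + e s • w s) - (y₀ + e s • w' s)‖ := hlip _ _ _
        _ = k s * (e s * ‖(w - w') s‖) := by
          rw [add_sub_add_left_eq_sub, ← smul_sub, norm_smul, Real.norm_of_nonneg (he_pos s).le,
            BoundedContinuousFunction.sub_apply]
        _ ≤ K s * (e s * ‖w - w'‖) := by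
          have := he_pos s
          gcongr
          · exact (le_abs_self _).trans (le_add_of_nonneg_right (norm_nonneg _))
          · exact (w - w').norm_coe_le_norm s
        _ = ‖w - w'‖ * (K s * e s) := by ring)
  have hy : (fun t => y₀ + e t • w t) = fun t => y₀ + ∫ s in t₀..t, F s (y₀ + e s • w s) :=
    funext fun t => congrArg (y₀ + ·) (hw t)
  refine ⟨fun t => y₀ + e t • w t, (congrFun hy t₀).trans (by simp), fun t => ?_⟩
  have hcont : Continuous fun s => F s (y₀ + e s • w s) := by fun_prop
  simpa only [hy] using (hcont.integral_hasStrictDerivAt t₀ t).hasDerivAt.const_add y₀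

end CauchyLipschitz

section LinearSystem

lemma gronwallBound_mul_left (δ K S x : ℝ) :
    gronwallBound δ K (K * S) x = δ * Real.exp (K * x) + S * (Real.exp (K * x) - 1) := by
  rcases eq_or_ne K 0 with rfl | hK
  · simp [gronwallBound_K0]
  · rw [gronwallBound_of_K_ne_0 hK, mul_div_cancel_left₀ S hK]

lemma norm_le_exp_mul_add_integral_of_norm_deriv_sub_le {E : Type*} [NormedAddCommGroup E]
    [NormedSpace ℝ E] [CompleteSpace E] {y y' h : ℝ → E} {p q K : ℝ} (hK : 0 ≤ K)
    (hh : Continuous h) (hy : ∀ x ∈ Icc p q, HasDerivAt y (y' x) x)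
    (hbound : ∀ x ∈ Icc p q, ‖y' x - h x‖ ≤ K * ‖y x‖) :
    ∀ x ∈ Icc p q, ‖y x‖ ≤ Real.exp (K * (q - p)) * (‖y p‖ + ∫ t in p..q, ‖h t‖) := by
  intro x hx
  set S := ∫ t in p..q, ‖h t‖
  have primitive_le : ∀ t ∈ Icc p q, ‖∫ s in p..t, h s‖ ≤ S := fun t ht =>
    (intervalIntegral.norm_integral_le_integral_norm ht.1).trans <|
      intervalIntegral.integral_mono_interval le_rfl ht.1 ht.2
        (.of_forall fun _ => norm_nonneg _) (hh.norm.intervalIntegrable _ _)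
  let z : ℝ → E := fun t => y t - ∫ s in p..t, h s
  have hz : ∀ t ∈ Icc p q, HasDerivAt z (y' t - h t) t := fun t ht =>
    (hy t ht).sub (hh.integral_hasStrictDerivAt p t).hasDerivAt
  have hy_le : ∀ t ∈ Icc p q, ‖y t‖ ≤ ‖z t‖ + S := fun t ht =>
    calc ‖y t‖ = ‖z t + ∫ s in p..t, h s‖ := by rw [sub_add_cancel]
      _ ≤ ‖z t‖ + S := (norm_add_le _ _).trans (add_le_add_right (primitive_le t ht) _)
  have hz_le := norm_le_gronwallBound_of_norm_deriv_right_le (δ := ‖y p‖) (K := K) (ε := K * S)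
    (HasDerivAt.continuousOn hz) (fun t ht => (hz t (Ico_subset_Icc_self ht)).hasDerivWithinAt)
    (by simp [z]) (fun t ht => (hbound t (Ico_subset_Icc_self ht)).trans <| by
      rw [← mul_add]
      exact mul_le_mul_of_nonneg_left (hy_le t (Ico_subset_Icc_self ht)) hK) x hx
  rw [gronwallBound_mul_left] at hz_le
  have hS : 0 ≤ S := intervalIntegral.integral_nonneg (hx.1.trans hx.2) fun _ _ => norm_nonneg _
  calc ‖y x‖ ≤ ‖z x‖ + S := hy_le x hx
    _ ≤ Real.exp (K * (x - p)) * (‖y p‖ + S) := by linarith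
    _ ≤ Real.exp (K * (q - p)) * (‖y p‖ + S) := by
      gcongr
      exact hx.2

variable {𝕜 : Type*} [NontriviallyNormedField 𝕜]
  {E : Type*} [NormedAddCommGroup E] [NormedSpace ℝ E] [NormedSpace 𝕜 E] [CompleteSpace E]

lemma exists_forall_hasDerivAt_clm_apply {A : ℝ → E →L[𝕜] E} (hA : Continuous A) (t₀ : ℝ)
    (y₀ : E) : ∃ y : ℝ → E, y t₀ = y₀ ∧ ∀ t, HasDerivAt y (A t (y t)) t :=
  exists_forall_hasDerivAt_of_lipschitz (F := fun t => A t) (by fun_prop) hA.norm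
    (fun t x y => by rw [← map_sub]; exact (A t).le_opNorm _) t₀ y₀

lemma norm_le_of_hasDerivAt_clm_add {A : ℝ → E →L[𝕜] E} {h y : ℝ → E} {p q K : ℝ} (hK : 0 ≤ K)
    (hA : ∀ x ∈ Icc p q, ‖A x‖ ≤ K) (hh : Continuous h)
    (hy : ∀ x ∈ Icc p q, HasDerivAt y (A x (y x) + h x) x) :
    ∀ x ∈ Icc p q, ‖y x‖ ≤ Real.exp (K * (q - p)) * (‖y p‖ + ∫ t in p..q, ‖h t‖) :=
  norm_le_exp_mul_add_integral_of_norm_deriv_sub_le hK hh hy fun x hx => by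
    rw [add_sub_cancel_right]
    exact (A x).le_of_opNorm_le (hA x hx) (y x)

lemma continuous_apply_of_hasDerivAt {Γ : Type*} [TopologicalSpace Γ] [FirstCountableTopology Γ]
    {A : Γ → ℝ → E →L[𝕜] E} (hA : Continuous (Function.uncurry A)) {p q K : ℝ} (hpq : p ≤ q)
    (hK : 0 ≤ K) (hAK : ∀ γ, ∀ x ∈ Icc p q, ‖A γ x‖ ≤ K) {G : Γ → ℝ → E} {v : E}
    (hG : ∀ γ x, HasDerivAt (G γ) (A γ x (G γ x)) x) (hGp : ∀ γ, G γ p = v) :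
    Continuous fun γ => G γ q := by
  refine continuous_iff_continuousAt.mpr fun γ₀ => ?_
  have hG₀ : Continuous (G γ₀) := continuous_iff_continuousAt.mpr fun x => (hG γ₀ x).continuousAt
  let h (γ : Γ) (x : ℝ) : E := (A γ x - A γ₀ x) (G γ₀ x)
  have hh : Continuous (Function.uncurry h) := by
    fun_prop
  have hdiff (γ) : ‖G γ q - G γ₀ q‖ ≤ Real.exp (K * (q - p)) * ∫ x in p..q, ‖h γ x‖ := by
    have hderiv (x : ℝ) :
        HasDerivAt (G γ - G γ₀) (A γ x ((G γ - G γ₀) x) + h γ x) x :=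
      ((hG γ x).sub (hG γ₀ x)).congr_deriv <| by
        simp only [h, Pi.sub_apply, map_sub, sub_apply]
        abel
    simpa [hGp] using norm_le_of_hasDerivAt_clm_add hK (hAK γ) (h := h γ) (by fun_prop)
      (fun x _ => hderiv x) q (right_mem_Icc.mpr hpq)
  have hint : Continuous fun γ => Real.exp (K * (q - p)) * ∫ x in p..q, ‖h γ x‖ :=
    continuous_const.mul <| intervalIntegral.continuous_parametric_intervalIntegral_of_continuous'
      (f := fun γ x => ‖h γ x‖) (by fun_prop) p q
  refine tendsto_iff_norm_sub_tendsto_zero.mpr <| squeeze_zero (fun _ => norm_nonneg _) hdiff ?_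
  simpa [h] using hint.tendsto γ₀

lemma norm_le_of_shooting {A : ℝ → ℂ × ℂ →L[ℂ] ℂ × ℂ} {h Y G : ℝ → ℂ × ℂ} {p q K δ : ℝ}
    (hK : 0 ≤ K) (hA : ∀ x ∈ Icc p q, ‖A x‖ ≤ K) (hh : Continuous h) (hδ : 0 < δ)
    (hG : ∀ x ∈ Icc p q, HasDerivAt G (A x (G x)) x) (hGp : G p = (0, 1)) (hGq : δ ≤ ‖(G q).1‖)
    (hY : ∀ x ∈ Icc p q, HasDerivAt Y (A x (Y x) + h x) x) {x : ℝ} (hx : x ∈ Icc p q) :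
    ‖Y x‖ ≤ Real.exp (K * (q - p)) * (1 + (1 + Real.exp (K * (q - p))) / δ) *
      (‖(Y p).1‖ + ‖(Y q).1‖ + ∫ t in p..q, ‖h t‖) := by
  have hpq : p ≤ q := hx.1.trans hx.2
  set e := Real.exp (K * (q - p))
  set S := ∫ t in p..q, ‖h t‖
  have hS : 0 ≤ S := intervalIntegral.integral_nonneg hpq fun _ _ => norm_nonneg _
  set D := ‖(Y p).1‖ + ‖(Y q).1‖ + S
  set v := (Y p).2
  have hG_le : ∀ t ∈ Icc p q, ‖G t‖ ≤ e := fun t ht => by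
    have hgrowth := norm_le_of_hasDerivAt_clm_add hK hA (h := 0) continuous_zero
      (by simpa using hG) t ht
    simpa [hGp] using hgrowth
  let Z : ℝ → ℂ × ℂ := fun t => Y t - v • G t
  have hZ : ∀ t ∈ Icc p q, HasDerivAt Z (A t (Z t) + h t) t := fun t ht =>
    ((hY t ht).sub ((hG t ht).const_smul v)).congr_deriv <| by
      rw [map_sub, map_smul, sub_add_eq_add_sub]
  have hZp : ‖Z p‖ ≤ ‖(Y p).1‖ + ‖(Y q).1‖ := by
    have hZp_eq : Z p = ((Y p).1, 0) := by
      ext <;> simp [Z, v, hGp]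
    simp [hZp_eq]
  have hZ_le : ∀ t ∈ Icc p q, ‖Z t‖ ≤ e * D := fun t ht =>
    (norm_le_of_hasDerivAt_clm_add hK hA hh hZ t ht).trans <|
      mul_le_mul_of_nonneg_left (add_le_add_left hZp S) (Real.exp_nonneg _)
  have hv : ‖v‖ ≤ (1 + e) / δ * D := by
    have hZq : v * (G q).1 = (Y q).1 - (Z q).1 := by simp [Z]
    rw [div_mul_eq_mul_div, le_div_iff₀ hδ]
    calc ‖v‖ * δ ≤ ‖v * (G q).1‖ := by rw [norm_mul]; gcongr
      _ ≤ ‖(Y q).1‖ + ‖(Z q).1‖ := hZq ▸ norm_sub_le _ _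
      _ ≤ D + e * D := by
        gcongr
        · linarith [norm_nonneg (Y p).1]
        · exact (norm_fst_le _).trans (hZ_le q (right_mem_Icc.mpr hpq))
      _ = (1 + e) * D := by ring
  calc ‖Y x‖ = ‖Z x + v • G x‖ := by rw [sub_add_cancel]
    _ ≤ ‖Z x‖ + ‖v‖ * ‖G x‖ := (norm_add_le _ _).trans_eq (by rw [norm_smul])
    _ ≤ e * D + (1 + e) / δ * D * e := by
      gcongr
      · exact hZ_le x hx
      · exact hG_le x hx
    _ = e * (1 + (1 + e) / δ) * D := by ring

/-- The Dirichlet problem on `[p, q]` for the first component of `Y' = A Y` has only the trivial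
solution, expressed by shooting from `p`. -/
def ShootingInjective (A : ℝ → ℂ × ℂ →L[ℂ] ℂ × ℂ) (p q : ℝ) : Prop :=
  ∀ G : ℝ → ℂ × ℂ, (∀ x, HasDerivAt G (A x (G x)) x) → G p = (0, 1) → (G q).1 ≠ 0

theorem exists_forall_norm_le_of_shootingInjective {Γ : Type*} [TopologicalSpace Γ]
    [CompactSpace Γ] [FirstCountableTopology Γ] {A : Γ → ℝ → ℂ × ℂ →L[ℂ] ℂ × ℂ}
    (hA : Continuous (Function.uncurry A)) {p q : ℝ} (hpq : p ≤ q)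
    (hinj : ∀ γ, ShootingInjective (A γ) p q) :
    ∃ C, ∀ γ, ∀ Y h : ℝ → ℂ × ℂ, Continuous h →
      (∀ x ∈ Icc p q, HasDerivAt Y (A γ x (Y x) + h x) x) →
      ∀ x ∈ Icc p q, ‖Y x‖ ≤ C * (‖(Y p).1‖ + ‖(Y q).1‖ + ∫ t in p..q, ‖h t‖) := by
  obtain ⟨K, hK⟩ := (isCompact_univ.prod isCompact_Icc).exists_bound_of_continuousOn
    (hA.continuousOn (s := univ ×ˢ Icc p q))
  have hAK : ∀ γ, ∀ x ∈ Icc p q, ‖A γ x‖ ≤ |K| := fun γ x hx =>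
    (hK (γ, x) ⟨mem_univ γ, hx⟩).trans (le_abs_self K)
  choose G hGp hG using fun γ =>
    exists_forall_hasDerivAt_clm_apply (A := A γ) (by fun_prop) p ((0, 1) : ℂ × ℂ)
  have hcont := continuous_apply_of_hasDerivAt hA hpq (abs_nonneg K) hAK hG hGp
  obtain ⟨δ, hδ, hGδ⟩ := isCompact_univ.exists_forall_le' (f := fun γ => ‖(G γ q).1‖)
    (by fun_prop) (a := 0) fun γ _ => norm_pos_iff.mpr (hinj γ (G γ) (hG γ) (hGp γ))
  exact ⟨_, fun γ Y h hh hY x hx => norm_le_of_shooting (abs_nonneg K) (hAK γ) hh hδ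
    (fun t _ => hG γ t) (hGp γ) (hGδ γ (mem_univ γ)) hY hx⟩

end LinearSystem

section SecondOrder

/-- `f` is a `C²` solution of `f'' + b f' + c f = φ + ψ'` on `[p, q]`; the forcing is split because
the `ψ` part is measured one derivative lower than `φ`. -/
structure IsForcedSolution (b c : ℝ → ℂ) (p q : ℝ) (f φ ψ : ℝ → ℂ) : Prop where
  contDiff : ContDiff ℝ 2 f
  continuous_forcing : Continuous φ
  contDiff_flux : ContDiff ℝ 1 ψ
  eqn : ∀ x ∈ Icc p q, deriv (deriv f) x + b x * deriv f x + c x * f x = φ x + deriv ψ x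

/-- The Dirichlet problem for `g'' + b g' + c g = 0` on `[p, q]` has only the trivial solution. -/
def DirichletInjective (b c : ℝ → ℂ) (p q : ℝ) : Prop :=
  ∀ g : ℝ → ℂ, IsForcedSolution b c p q g 0 0 → g p = 0 → g q = 0 → ∀ x ∈ Icc p q, g x = 0

/-- The square of the `H¹` norm on `[p, q]` at frequency `l`. -/
noncomputable def scaledEnergy (l p q : ℝ) (f : ℝ → ℂ) : ℝ :=
  l ^ 2 * (∫ x in p..q, ‖f x‖ ^ 2) + ∫ x in p..q, ‖deriv f x‖ ^ 2

/-- The size of the data of a forced Dirichlet problem, in the units of `scaledEnergy l`. -/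
noncomputable def scaledData (l p q : ℝ) (f φ ψ : ℝ → ℂ) : ℝ :=
  l * (‖f p‖ ^ 2 + ‖f q‖ ^ 2) + (l ^ 2)⁻¹ * (∫ x in p..q, ‖φ x‖ ^ 2) + ∫ x in p..q, ‖ψ x‖ ^ 2

/-- The matrix of `f'' + b f' + c f = 0` as a first order system for `(f, f')`. -/
noncomputable def companion (b c : ℂ) : ℂ × ℂ →L[ℂ] ℂ × ℂ :=
  (ContinuousLinearMap.snd ℂ ℂ ℂ).prod
    (-(b • ContinuousLinearMap.snd ℂ ℂ ℂ) - c • ContinuousLinearMap.fst ℂ ℂ ℂ)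

lemma companion_apply (b c : ℂ) (y : ℂ × ℂ) : companion b c y = (y.2, -(b * y.2) - c * y.1) :=
  rfl

lemma continuous_companion : Continuous (Function.uncurry companion) := by
  have heq : Function.uncurry companion = fun z : ℂ × ℂ =>
      companion 0 0 + z.1 • (companion 1 0 - companion 0 0) +
        z.2 • (companion 0 1 - companion 0 0) := by
    ext <;> simp [companion_apply, Function.uncurry_def]
  rw [heq]
  fun_prop

lemma hasDerivAt_deriv_of_contDiff_two {f : ℝ → ℂ} (hf : ContDiff ℝ 2 f) (x : ℝ) :
    HasDerivAt (deriv f) (deriv (deriv f) x) x :=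
  ((contDiff_succ_iff_deriv.mp hf).2.2.differentiable one_ne_zero x).hasDerivAt

variable {b c : ℝ → ℂ} {p q : ℝ} {f φ ψ : ℝ → ℂ}

/-- Using `f' - ψ` in place of `f'` removes the derivative of `ψ` from the system. -/
lemma IsForcedSolution.hasDerivAt_companion (hf : IsForcedSolution b c p q f φ ψ) :
    ∀ x ∈ Icc p q, HasDerivAt (fun t => (f t, deriv f t - ψ t))
      (companion (b x) (c x) (f x, deriv f x - ψ x) + (ψ x, φ x - b x * ψ x)) x := by
  intro x hx
  have hf' := (hf.contDiff.differentiable two_ne_zero x).hasDerivAt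
  have hψ' := (hf.contDiff_flux.differentiable one_ne_zero x).hasDerivAt
  refine (hf'.prodMk ((hasDerivAt_deriv_of_contDiff_two hf.contDiff x).sub hψ')).congr_deriv ?_
  rw [companion_apply, Prod.mk_add_mk, Prod.mk.injEq]
  exact ⟨by ring, by linear_combination hf.eqn x hx⟩

lemma hasDerivAt_fst_snd_of_companion {G : ℝ → ℂ × ℂ} {x : ℝ}
    (hG : HasDerivAt G (companion (b x) (c x) (G x)) x) :
    HasDerivAt (fun t => (G t).1) (G x).2 x ∧
      HasDerivAt (fun t => (G t).2) (-(b x * (G x).2) - c x * (G x).1) x :=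
  ⟨(ContinuousLinearMap.fst ℝ ℂ ℂ).hasFDerivAt.comp_hasDerivAt x hG,
    (ContinuousLinearMap.snd ℝ ℂ ℂ).hasFDerivAt.comp_hasDerivAt x hG⟩

lemma isForcedSolution_fst_of_hasDerivAt_companion (hb : Continuous b) (hc : Continuous c)
    {G : ℝ → ℂ × ℂ} (hG : ∀ x, HasDerivAt G (companion (b x) (c x) (G x)) x) :
    IsForcedSolution b c p q (fun x => (G x).1) 0 0 := by
  have hG_cont : Continuous G := continuous_iff_continuousAt.mpr fun x => (hG x).continuousAt
  have hG₁ (x) := (hasDerivAt_fst_snd_of_companion (hG x)).1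
  have hG₂ (x) := (hasDerivAt_fst_snd_of_companion (hG x)).2
  have hderiv₁ : deriv (fun x => (G x).1) = fun x => (G x).2 := funext fun x => (hG₁ x).deriv
  have hderiv₂ : deriv (fun x => (G x).2) = fun x => -(b x * (G x).2) - c x * (G x).1 :=
    funext fun x => (hG₂ x).deriv
  refine ⟨?_, continuous_zero, contDiff_const, fun x _ => ?_⟩
  · rw [show (2 : WithTop ℕ∞) = 1 + 1 by norm_num, contDiff_succ_iff_deriv, hderiv₁,
      contDiff_one_iff_deriv, hderiv₂]
    exact ⟨fun x => (hG₁ x).differentiableAt, by simp,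
      fun x => (hG₂ x).differentiableAt, by fun_prop⟩
  · simp only [hderiv₁, hderiv₂, Pi.zero_apply, deriv_zero]
    ring

lemma shootingInjective_companion (hb : Continuous b) (hc : Continuous c) (hpq : p < q)
    (hinj : DirichletInjective b c p q) :
    ShootingInjective (fun x => companion (b x) (c x)) p q := by
  intro G hG hGp hGq
  have hG_zero := hinj _ (isForcedSolution_fst_of_hasDerivAt_companion hb hc hG) (by simp [hGp]) hGq
  have hp : p ∈ Icc p q := left_mem_Icc.mpr hpq.le
  have hderiv_one : HasDerivWithinAt (fun x => (G x).1) 1 (Icc p q) p := by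
    simpa [hGp] using (hasDerivAt_fst_snd_of_companion (hG p)).1.hasDerivWithinAt (s := Icc p q)
  have hderiv_zero : HasDerivWithinAt (fun x => (G x).1) 0 (Icc p q) p :=
    (hasDerivWithinAt_const p _ 0).congr hG_zero (hG_zero p hp)
  exact one_ne_zero ((uniqueDiffOn_Icc hpq p hp).eq_deriv _ hderiv_one hderiv_zero)

lemma integral_norm_sq_nonneg {p q : ℝ} (hpq : p ≤ q) (f : ℝ → ℂ) :
    0 ≤ ∫ x in p..q, ‖f x‖ ^ 2 :=
  intervalIntegral.integral_nonneg hpq fun _ _ => by positivity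

lemma sq_intervalIntegral_le {u : ℝ → ℝ} (hu : Continuous u) (hpq : p < q) :
    (∫ x in p..q, u x) ^ 2 ≤ (q - p) * ∫ x in p..q, u x ^ 2 := by
  set m := ∫ x in p..q, u x with hm
  have hvar : 0 ≤ ∫ x in p..q, ((q - p) * u x - m) ^ 2 :=
    intervalIntegral.integral_nonneg hpq.le fun _ _ => sq_nonneg _
  have hexpand : ∫ x in p..q, ((q - p) * u x - m) ^ 2 =
      (q - p) * ((q - p) * (∫ x in p..q, u x ^ 2) - m ^ 2) := by
    have hpoint : ∀ x, ((q - p) * u x - m) ^ 2 =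
        (q - p) ^ 2 * u x ^ 2 - 2 * (q - p) * m * u x + m ^ 2 := fun x => by ring
    have hint {v : ℝ → ℝ} (hv : Continuous v) : IntervalIntegrable v volume p q :=
      hv.intervalIntegrable p q
    simp only [hpoint]
    rw [intervalIntegral.integral_add (hint (by fun_prop)) (hint (by fun_prop)),
      intervalIntegral.integral_sub (hint (by fun_prop)) (hint (by fun_prop)),
      intervalIntegral.integral_const_mul, intervalIntegral.integral_const_mul,
      intervalIntegral.integral_const, ← hm, smul_eq_mul]
    ring
  rw [hexpand] at hvar
  linarith [nonneg_of_mul_nonneg_right hvar (sub_pos.mpr hpq)]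

lemma sq_integral_norm_forcing_le {M : ℝ} (hpq : p < q) (hb : Continuous b)
    (hM : ∀ x ∈ Icc p q, ‖b x‖ ≤ M) (hφ : Continuous φ) (hψ : Continuous ψ) :
    (∫ x in p..q, ‖(ψ x, φ x - b x * ψ x)‖) ^ 2 ≤ 2 * (q - p) * (1 + M) ^ 2 *
      ((∫ x in p..q, ‖φ x‖ ^ 2) + ∫ x in p..q, ‖ψ x‖ ^ 2) := by
  have hpoint : ∀ x ∈ Icc p q, ‖(ψ x, φ x - b x * ψ x)‖ ^ 2 ≤
      2 * (1 + M) ^ 2 * (‖φ x‖ ^ 2 + ‖ψ x‖ ^ 2) := fun x hx => by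
    have hM₀ : 0 ≤ M := (norm_nonneg _).trans (hM x hx)
    have hsum : ‖(ψ x, φ x - b x * ψ x)‖ ≤ (1 + M) * (‖φ x‖ + ‖ψ x‖) := by
      have hflux : ‖b x * ψ x‖ ≤ M * ‖ψ x‖ :=
        (norm_mul _ _).trans_le (mul_le_mul_of_nonneg_right (hM x hx) (norm_nonneg _))
      have hφ₀ : 0 ≤ M * ‖φ x‖ := by positivity
      have hψ₀ : 0 ≤ M * ‖ψ x‖ := by positivity
      exact max_le (by dsimp only; linarith [norm_nonneg (φ x)])
        (by dsimp only; linarith [norm_sub_le (φ x) (b x * ψ x), norm_nonneg (ψ x)])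
    calc ‖(ψ x, φ x - b x * ψ x)‖ ^ 2 ≤ ((1 + M) * (‖φ x‖ + ‖ψ x‖)) ^ 2 := by gcongr
      _ = (1 + M) ^ 2 * (‖φ x‖ + ‖ψ x‖) ^ 2 := mul_pow _ _ _
      _ ≤ (1 + M) ^ 2 * (2 * (‖φ x‖ ^ 2 + ‖ψ x‖ ^ 2)) := by
        gcongr
        exact add_sq_le
      _ = 2 * (1 + M) ^ 2 * (‖φ x‖ ^ 2 + ‖ψ x‖ ^ 2) := by ring
  have hφ_int : IntervalIntegrable (fun x => ‖φ x‖ ^ 2) volume p q :=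
    (hφ.norm.pow 2).intervalIntegrable p q
  have hψ_int : IntervalIntegrable (fun x => ‖ψ x‖ ^ 2) volume p q :=
    (hψ.norm.pow 2).intervalIntegrable p q
  calc (∫ x in p..q, ‖(ψ x, φ x - b x * ψ x)‖) ^ 2
      ≤ (q - p) * ∫ x in p..q, ‖(ψ x, φ x - b x * ψ x)‖ ^ 2 :=
        sq_intervalIntegral_le (by fun_prop) hpq
    _ ≤ (q - p) * ∫ x in p..q, 2 * (1 + M) ^ 2 * (‖φ x‖ ^ 2 + ‖ψ x‖ ^ 2) := by
        refine mul_le_mul_of_nonneg_left ?_ (sub_nonneg.mpr hpq.le)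
        exact intervalIntegral.integral_mono_on hpq.le
          (Continuous.intervalIntegrable (by fun_prop) _ _)
          ((hφ_int.add hψ_int).const_mul _) hpoint
    _ = _ := by
        rw [intervalIntegral.integral_const_mul, intervalIntegral.integral_add hφ_int hψ_int]
        ring

lemma scaledData_nonneg {l : ℝ} (hl : 0 ≤ l) (hpq : p ≤ q) (f φ ψ : ℝ → ℂ) :
    0 ≤ scaledData l p q f φ ψ := by
  have hφ := integral_norm_sq_nonneg hpq φ
  have hψ := integral_norm_sq_nonneg hpq ψ
  unfold scaledData
  positivity

lemma sq_boundary_add_forcing_le {M : ℝ} (hpq : p < q) (hb : Continuous b)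
    (hM : ∀ x ∈ Icc p q, ‖b x‖ ≤ M) (hφ : Continuous φ) (hψ : Continuous ψ) (f : ℝ → ℂ) :
    (‖f p‖ + ‖f q‖ + ∫ x in p..q, ‖(ψ x, φ x - b x * ψ x)‖) ^ 2 ≤
      3 * (1 + 2 * (q - p) * (1 + M) ^ 2) * scaledData 1 p q f φ ψ := by
  have hforcing := sq_integral_norm_forcing_le hpq hb hM hφ hψ
  set S := ∫ x in p..q, ‖(ψ x, φ x - b x * ψ x)‖
  set Λ := 2 * (q - p) * (1 + M) ^ 2
  have hdata : scaledData 1 p q f φ ψ =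
      ‖f p‖ ^ 2 + ‖f q‖ ^ 2 + ((∫ x in p..q, ‖φ x‖ ^ 2) + ∫ x in p..q, ‖ψ x‖ ^ 2) := by
    unfold scaledData
    ring
  have hforcing₀ : 0 ≤ (∫ x in p..q, ‖φ x‖ ^ 2) + ∫ x in p..q, ‖ψ x‖ ^ 2 :=
    add_nonneg (integral_norm_sq_nonneg hpq.le _) (integral_norm_sq_nonneg hpq.le _)
  rw [hdata]
  calc (‖f p‖ + ‖f q‖ + S) ^ 2 ≤ 3 * (‖f p‖ ^ 2 + ‖f q‖ ^ 2 + S ^ 2) := by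
        linarith [sq_nonneg (‖f p‖ - ‖f q‖), sq_nonneg (‖f p‖ - S), sq_nonneg (‖f q‖ - S)]
    _ ≤ _ := by
        have hboundary : 0 ≤ Λ * (‖f p‖ ^ 2 + ‖f q‖ ^ 2) := by positivity
        linarith

lemma scaledEnergy_one_le_of_norm_sq_le {B : ℝ} (hpq : p ≤ q)
    (hf : IsForcedSolution b c p q f φ ψ)
    (hB : ∀ x ∈ Icc p q, ‖(f x, deriv f x - ψ x)‖ ^ 2 ≤ B) :
    scaledEnergy 1 p q f ≤ 3 * (q - p) * B + 2 * ∫ x in p..q, ‖ψ x‖ ^ 2 := by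
  have hf₀ : Continuous f := hf.contDiff.continuous
  have hf₁ : Continuous (deriv f) := hf.contDiff.continuous_deriv (by norm_num)
  have hψ : Continuous ψ := hf.contDiff_flux.continuous
  have hint {u : ℝ → ℝ} (hu : Continuous u) : IntervalIntegrable u volume p q :=
    hu.intervalIntegrable p q
  have hf_le : ∀ x ∈ Icc p q, ‖f x‖ ^ 2 ≤ B := fun x hx =>
    (pow_le_pow_left₀ (norm_nonneg _) (norm_fst_le (f x, deriv f x - ψ x)) 2).trans (hB x hx)
  have hf'_le : ∀ x ∈ Icc p q, ‖deriv f x‖ ^ 2 ≤ 2 * B + 2 * ‖ψ x‖ ^ 2 := fun x hx => by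
    have hflux := (pow_le_pow_left₀ (norm_nonneg _)
      (norm_snd_le (f x, deriv f x - ψ x)) 2).trans (hB x hx)
    calc ‖deriv f x‖ ^ 2 ≤ (‖deriv f x - ψ x‖ + ‖ψ x‖) ^ 2 := by
          gcongr
          exact norm_le_norm_sub_add _ _
      _ ≤ 2 * (‖deriv f x - ψ x‖ ^ 2 + ‖ψ x‖ ^ 2) := add_sq_le
      _ ≤ 2 * B + 2 * ‖ψ x‖ ^ 2 := by linarith
  have hf_int := intervalIntegral.integral_mono_on hpq (hint (by fun_prop))
    (hint continuous_const) hf_le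
  have hf'_int := intervalIntegral.integral_mono_on hpq (hint (by fun_prop))
    (hint (by fun_prop)) hf'_le
  rw [intervalIntegral.integral_add (hint (by fun_prop)) (hint (by fun_prop))] at hf'_int
  simp only [intervalIntegral.integral_const_mul, intervalIntegral.integral_const,
    smul_eq_mul] at hf_int hf'_int
  unfold scaledEnergy
  linarith

theorem exists_scaledEnergy_one_le_of_dirichletInjective {Γ : Type*} [TopologicalSpace Γ]
    [CompactSpace Γ] [FirstCountableTopology Γ] {c : Γ → ℝ → ℂ} (hb : Continuous b)
    (hc : Continuous (Function.uncurry c)) (hpq : p < q)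
    (hinj : ∀ γ, DirichletInjective b (c γ) p q) :
    ∃ K, 0 ≤ K ∧ ∀ γ f φ ψ, IsForcedSolution b (c γ) p q f φ ψ →
      scaledEnergy 1 p q f ≤ K * scaledData 1 p q f φ ψ := by
  obtain ⟨M, hM⟩ := isCompact_Icc.exists_bound_of_continuousOn (hb.continuousOn (s := Icc p q))
  obtain ⟨C, hC⟩ := exists_forall_norm_le_of_shootingInjective
    (A := fun γ x => companion (b x) (c γ x))
    (continuous_companion.comp (hb.comp continuous_snd |>.prodMk hc)) hpq.le
    fun γ => shootingInjective_companion hb (by fun_prop) hpq (hinj γ)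
  set Λ := 3 * (1 + 2 * (q - p) * (1 + M) ^ 2)
  refine ⟨3 * (q - p) * (C ^ 2 * Λ) + 2, by positivity, fun γ f φ ψ hf => ?_⟩
  have hψ : Continuous ψ := hf.contDiff_flux.continuous
  have hφ : Continuous φ := hf.continuous_forcing
  have hsup : ∀ x ∈ Icc p q, ‖(f x, deriv f x - ψ x)‖ ^ 2 ≤
      C ^ 2 * (Λ * scaledData 1 p q f φ ψ) := fun x hx =>
    calc ‖(f x, deriv f x - ψ x)‖ ^ 2
        ≤ (C * (‖f p‖ + ‖f q‖ + ∫ t in p..q, ‖(ψ t, φ t - b t * ψ t)‖)) ^ 2 :=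
          pow_le_pow_left₀ (norm_nonneg _)
            (hC γ _ _ (by fun_prop) hf.hasDerivAt_companion x hx) 2
      _ ≤ C ^ 2 * (Λ * scaledData 1 p q f φ ψ) := by
          rw [mul_pow]
          gcongr
          exact sq_boundary_add_forcing_le hpq hb hM hφ hψ f
  have hψ_le : ∫ x in p..q, ‖ψ x‖ ^ 2 ≤ scaledData 1 p q f φ ψ := by
    have hφ₀ := integral_norm_sq_nonneg hpq.le φ
    refine le_add_of_nonneg_left ?_
    positivity
  linarith [scaledEnergy_one_le_of_norm_sq_le hpq.le hf hsup]

lemma exists_scaledEnergy_one_le_of_isCompact {Γ : Type*} [TopologicalSpace Γ]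
    [FirstCountableTopology Γ] {S : Set Γ} {c : Γ → ℝ → ℂ} (hb : Continuous b)
    (hc : Continuous (Function.uncurry c)) (hpq : p < q) (hS : IsCompact S)
    (hinj : ∀ γ ∈ S, DirichletInjective b (c γ) p q) :
    ∃ K, 0 ≤ K ∧ ∀ γ ∈ S, ∀ f φ ψ, IsForcedSolution b (c γ) p q f φ ψ →
      scaledEnergy 1 p q f ≤ K * scaledData 1 p q f φ ψ := by
  have : CompactSpace S := isCompact_iff_compactSpace.mp hS
  have hcont : Continuous (Function.uncurry fun γ : S => c γ) :=
    hc.comp (continuous_subtype_val.prodMap continuous_id)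
  obtain ⟨K, hK₀, hK⟩ := exists_scaledEnergy_one_le_of_dirichletInjective hb hcont hpq
    fun γ => hinj γ γ.2
  exact ⟨K, hK₀, fun γ hγ => hK ⟨γ, hγ⟩⟩

open scoped RealInnerProductSpace in
lemma coercive_density_lower_bound {κ M : ℝ} (hκ : 0 < κ) (hMκ : 4 * M ^ 2 ≤ κ)
    {b c g g' φ ψ : ℂ} (hb : ‖b‖ ≤ M) (hc : c.re ≤ -κ) :
    2⁻¹ * (‖g'‖ ^ 2 + κ * ‖g‖ ^ 2) - (κ⁻¹ * ‖φ‖ ^ 2 + ‖ψ‖ ^ 2) ≤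
      ⟪g, φ - b * g' - c * g⟫ + ⟪g', g' - ψ⟫ := by
  have hcg : ⟪g, c * g⟫ = c.re * ‖g‖ ^ 2 := by
    rw [Complex.inner, mul_assoc, Complex.mul_conj, Complex.normSq_eq_norm_sq,
      Complex.re_mul_ofReal]
  have hpotential : κ * ‖g‖ ^ 2 ≤ -(c.re * ‖g‖ ^ 2) := by nlinarith [sq_nonneg ‖g‖]
  have hflux : ⟪g', ψ⟫ ≤ 4⁻¹ * ‖g'‖ ^ 2 + ‖ψ‖ ^ 2 := by
    linarith [real_inner_le_norm g' ψ, sq_nonneg (2⁻¹ * ‖g'‖ - ‖ψ‖)]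
  have hforcing : -⟪g, φ⟫ ≤ 4⁻¹ * (κ * ‖g‖ ^ 2) + κ⁻¹ * ‖φ‖ ^ 2 := by
    have hsq : 0 ≤ κ⁻¹ * (2⁻¹ * κ * ‖g‖ - ‖φ‖) ^ 2 := by positivity
    have hexpand : κ⁻¹ * (2⁻¹ * κ * ‖g‖ - ‖φ‖) ^ 2 =
        4⁻¹ * (κ * ‖g‖ ^ 2) + κ⁻¹ * ‖φ‖ ^ 2 - ‖g‖ * ‖φ‖ := by
      field_simp
      ring
    linarith [(abs_le.mp (abs_real_inner_le_norm g φ)).1]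
  have hdrift : ⟪g, b * g'⟫ ≤ 4⁻¹ * (κ * ‖g‖ ^ 2) + 4⁻¹ * ‖g'‖ ^ 2 :=
    calc ⟪g, b * g'⟫ ≤ ‖g‖ * (M * ‖g'‖) := by
          refine (real_inner_le_norm _ _).trans ?_
          rw [norm_mul]
          gcongr
      _ ≤ M ^ 2 * ‖g‖ ^ 2 + 4⁻¹ * ‖g'‖ ^ 2 := by
          linarith [sq_nonneg (M * ‖g‖ - 2⁻¹ * ‖g'‖)]
      _ ≤ 4⁻¹ * (κ * ‖g‖ ^ 2) + 4⁻¹ * ‖g'‖ ^ 2 := by nlinarith [sq_nonneg ‖g‖]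
  rw [inner_sub_right, inner_sub_right, inner_sub_right, hcg, real_inner_self_eq_norm_sq]
  linarith

open scoped RealInnerProductSpace in
/-- Integrating `⟪g, g' - ψ⟫'` over `[p, q]` gives zero, since `g` vanishes at both endpoints. -/
lemma IsForcedSolution.energy_le_of_re_le_neg {κ M : ℝ} (hpq : p ≤ q) (hκ : 0 < κ)
    (hMκ : 4 * M ^ 2 ≤ κ) (hb : Continuous b) (hc : Continuous c) (hbM : ∀ x ∈ Icc p q, ‖b x‖ ≤ M)
    (hcκ : ∀ x ∈ Icc p q, (c x).re ≤ -κ) (hf : IsForcedSolution b c p q f φ ψ) (hfp : f p = 0)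
    (hfq : f q = 0) :
    κ * (∫ x in p..q, ‖f x‖ ^ 2) + ∫ x in p..q, ‖deriv f x‖ ^ 2 ≤
      2 * (κ⁻¹ * (∫ x in p..q, ‖φ x‖ ^ 2) + ∫ x in p..q, ‖ψ x‖ ^ 2) := by
  have hf₀ : Continuous f := hf.contDiff.continuous
  have hf₁ : Continuous (deriv f) := hf.contDiff.continuous_deriv (by norm_num)
  have hψ : Continuous ψ := hf.contDiff_flux.continuous
  have hφ : Continuous φ := hf.continuous_forcing
  have hint {u : ℝ → ℝ} (hu : Continuous u) : IntervalIntegrable u volume p q :=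
    hu.intervalIntegrable p q
  let ρ : ℝ → ℝ := fun x =>
    ⟪f x, φ x - b x * deriv f x - c x * f x⟫ + ⟪deriv f x, deriv f x - ψ x⟫
  have hρ : Continuous ρ := by fun_prop
  have hderiv : ∀ x ∈ Icc p q, HasDerivAt (fun t => ⟪f t, deriv f t - ψ t⟫) (ρ x) x := by
    intro x hx
    have hf' := (hf.contDiff.differentiable two_ne_zero x).hasDerivAt
    have hψ' := (hf.contDiff_flux.differentiable one_ne_zero x).hasDerivAt
    refine (hf'.inner ℝ ((hasDerivAt_deriv_of_contDiff_two hf.contDiff x).sub hψ')).congr_deriv ?_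
    have hflux : deriv (deriv f) x - deriv ψ x = φ x - b x * deriv f x - c x * f x := by
      linear_combination hf.eqn x hx
    rw [hflux]
    rfl
  have hzero : ∫ x in p..q, ρ x = 0 := by
    rw [intervalIntegral.integral_eq_sub_of_hasDerivAt
      (fun x hx => hderiv x (uIcc_of_le hpq ▸ hx)) (hint hρ), hfp, hfq, inner_zero_left,
      inner_zero_left, sub_zero]
  have hmono := intervalIntegral.integral_mono_on hpq (hint (by fun_prop)) (hint hρ) fun x hx =>
    coercive_density_lower_bound (g := f x) (g' := deriv f x) (φ := φ x) (ψ := ψ x) hκ hMκ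
      (hbM x hx) (hcκ x hx)
  rw [hzero, intervalIntegral.integral_sub (hint (by fun_prop)) (hint (by fun_prop)),
    intervalIntegral.integral_const_mul,
    intervalIntegral.integral_add (hint (by fun_prop)) (hint (by fun_prop)),
    intervalIntegral.integral_add (hint (by fun_prop)) (hint (by fun_prop)),
    intervalIntegral.integral_const_mul, intervalIntegral.integral_const_mul] at hmono
  linarith

/-- The solution of `w'' = l² w` with `w p = P` and `w q = Q`, for `l ≠ 0`: it carries the boundary
values of a Dirichlet problem at the least possible energy at frequency `l`. -/
noncomputable def sinhLift (l p q : ℝ) (P Q : ℂ) (x : ℝ) : ℂ :=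
  (Real.sinh (l * (q - p)))⁻¹ • (Real.sinh (l * (q - x)) • P + Real.sinh (l * (x - p)) • Q)

variable {l : ℝ} (P Q : ℂ)

lemma sinh_mul_sub_pos (hl : 0 < l) (hpq : p < q) : 0 < Real.sinh (l * (q - p)) :=
  Real.sinh_pos_iff.mpr (mul_pos hl (sub_pos.mpr hpq))

lemma contDiff_sinhLift (l p q : ℝ) : ContDiff ℝ 2 (sinhLift l p q P Q) := by
  unfold sinhLift
  fun_prop

lemma sinhLift_left (hl : 0 < l) (hpq : p < q) : sinhLift l p q P Q p = P := by
  rw [sinhLift, sub_self, mul_zero, Real.sinh_zero, zero_smul, add_zero,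
    inv_smul_smul₀ (sinh_mul_sub_pos hl hpq).ne']

lemma sinhLift_right (hl : 0 < l) (hpq : p < q) : sinhLift l p q P Q q = Q := by
  rw [sinhLift, sub_self, mul_zero, Real.sinh_zero, zero_smul, zero_add,
    inv_smul_smul₀ (sinh_mul_sub_pos hl hpq).ne']

lemma hasDerivAt_sinhLift (l p q x : ℝ) : HasDerivAt (sinhLift l p q P Q)
    ((l / Real.sinh (l * (q - p))) •
      (Real.cosh (l * (x - p)) • Q - Real.cosh (l * (q - x)) • P)) x := by
  have hP := (((hasDerivAt_id x).const_sub q).const_mul l).sinh.smul_const P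
  have hQ := (((hasDerivAt_id x).sub_const p).const_mul l).sinh.smul_const Q
  refine ((hP.add hQ).const_smul (Real.sinh (l * (q - p)))⁻¹).congr_deriv ?_
  simp only [id, smul_sub, smul_add, smul_smul]
  module

lemma deriv_deriv_sinhLift (l p q x : ℝ) :
    deriv (deriv (sinhLift l p q P Q)) x = l ^ 2 • sinhLift l p q P Q x := by
  rw [funext fun t => (hasDerivAt_sinhLift P Q l p q t).deriv]
  have hP := (((hasDerivAt_id x).const_sub q).const_mul l).cosh.smul_const P
  have hQ := (((hasDerivAt_id x).sub_const p).const_mul l).cosh.smul_const Q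
  refine ((hQ.sub hP).const_smul (l / Real.sinh (l * (q - p)))).congr_deriv ?_ |>.deriv
  simp only [id, sinhLift, smul_sub, smul_add, smul_smul]
  module

lemma cosh_add_one_le_mul_sinh {L : ℝ} (hL : 0 < L) :
    Real.cosh L + 1 ≤ (1 + 2 / L) * Real.sinh L := by
  have hexp : Real.cosh L - Real.sinh L ≤ 1 := by
    rw [Real.cosh_sub_sinh]
    exact Real.exp_le_one_iff.mpr (by linarith)
  have hsinh : 2 ≤ 2 / L * Real.sinh L := by
    rw [div_mul_eq_mul_div, le_div_iff₀ hL]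
    linarith [Real.self_le_sinh_iff.mpr hL.le]
  linarith

open scoped RealInnerProductSpace in
lemma scaledEnergy_sinhLift_eq (hl : 0 < l) (hpq : p < q) :
    scaledEnergy l p q (sinhLift l p q P Q) = l / Real.sinh (l * (q - p)) *
      (Real.cosh (l * (q - p)) * (‖P‖ ^ 2 + ‖Q‖ ^ 2) - 2 * ⟪P, Q⟫) := by
  set w := sinhLift l p q P Q with hw_def
  have hw : ContDiff ℝ 2 w := contDiff_sinhLift P Q l p q
  have hw₀ : Continuous w := hw.continuous
  have hw₁ : Continuous (deriv w) := hw.continuous_deriv (by norm_num)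
  have hint {u : ℝ → ℝ} (hu : Continuous u) : IntervalIntegrable u volume p q :=
    hu.intervalIntegrable p q
  have hderiv (x : ℝ) :
      HasDerivAt (fun t => ⟪w t, deriv w t⟫) (l ^ 2 * ‖w x‖ ^ 2 + ‖deriv w x‖ ^ 2) x := by
    refine ((hasDerivAt_sinhLift P Q l p q x).differentiableAt.hasDerivAt.inner ℝ
      (hasDerivAt_deriv_of_contDiff_two hw x)).congr_deriv ?_
    rw [deriv_deriv_sinhLift, inner_smul_right, real_inner_self_eq_norm_sq,
      real_inner_self_eq_norm_sq]
  have hparts : scaledEnergy l p q w = ⟪w q, deriv w q⟫ - ⟪w p, deriv w p⟫ := by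
    rw [← intervalIntegral.integral_eq_sub_of_hasDerivAt (fun x _ => hderiv x)
      (hint (by fun_prop)), intervalIntegral.integral_add (hint (by fun_prop))
      (hint (by fun_prop)), intervalIntegral.integral_const_mul, scaledEnergy]
  rw [hparts, hw_def, sinhLift_left P Q hl hpq, sinhLift_right P Q hl hpq,
    (hasDerivAt_sinhLift P Q l p q p).deriv, (hasDerivAt_sinhLift P Q l p q q).deriv]
  simp only [sub_self, mul_zero, Real.cosh_zero, one_smul, inner_smul_right, inner_sub_right,
    real_inner_self_eq_norm_sq, real_inner_comm P Q]
  ring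

lemma scaledEnergy_sinhLift_le (hl : 0 < l) (hpq : p < q) :
    scaledEnergy l p q (sinhLift l p q P Q) ≤ (l + 2 / (q - p)) * (‖P‖ ^ 2 + ‖Q‖ ^ 2) := by
  have hL : 0 < l * (q - p) := mul_pos hl (sub_pos.mpr hpq)
  have hsinh : 0 < Real.sinh (l * (q - p)) := sinh_mul_sub_pos hl hpq
  have hcross : -(2 * inner ℝ P Q) ≤ ‖P‖ ^ 2 + ‖Q‖ ^ 2 := by
    linarith [(abs_le.mp (abs_real_inner_le_norm P Q)).1, sq_nonneg (‖P‖ - ‖Q‖)]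
  rw [scaledEnergy_sinhLift_eq P Q hl hpq]
  set L := l * (q - p) with hL_def
  calc l / Real.sinh L * (Real.cosh L * (‖P‖ ^ 2 + ‖Q‖ ^ 2) - 2 * inner ℝ P Q)
      ≤ l / Real.sinh L * ((Real.cosh L + 1) * (‖P‖ ^ 2 + ‖Q‖ ^ 2)) := by
        gcongr
        linarith
    _ ≤ l / Real.sinh L * ((1 + 2 / L) * Real.sinh L * (‖P‖ ^ 2 + ‖Q‖ ^ 2)) := by
        gcongr
        exact cosh_add_one_le_mul_sinh hL
    _ = (l + 2 / (q - p)) * (‖P‖ ^ 2 + ‖Q‖ ^ 2) := by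
        have hlen : q - p ≠ 0 := (sub_pos.mpr hpq).ne'
        rw [hL_def] at hsinh ⊢
        field_simp

lemma scaledEnergy_sinhLift_le_of_one_le (hl : 1 ≤ l) (hpq : p < q) :
    scaledEnergy l p q (sinhLift l p q P Q) ≤
      (1 + 2 / (q - p)) * (l * (‖P‖ ^ 2 + ‖Q‖ ^ 2)) := by
  have hlen : 0 < 2 / (q - p) := div_pos two_pos (sub_pos.mpr hpq)
  calc scaledEnergy l p q (sinhLift l p q P Q)
      ≤ (l + 2 / (q - p)) * (‖P‖ ^ 2 + ‖Q‖ ^ 2) :=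
        scaledEnergy_sinhLift_le P Q (one_pos.trans_le hl) hpq
    _ ≤ (l + l * (2 / (q - p))) * (‖P‖ ^ 2 + ‖Q‖ ^ 2) := by
        gcongr
        exact le_mul_of_one_le_left hlen.le hl
    _ = (1 + 2 / (q - p)) * (l * (‖P‖ ^ 2 + ‖Q‖ ^ 2)) := by ring

lemma integral_norm_add_sq_le {u v : ℝ → ℂ} (hpq : p ≤ q) (hu : Continuous u) (hv : Continuous v) :
    ∫ x in p..q, ‖u x + v x‖ ^ 2 ≤
      2 * ((∫ x in p..q, ‖u x‖ ^ 2) + ∫ x in p..q, ‖v x‖ ^ 2) := by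
  have hint {w : ℝ → ℝ} (hw : Continuous w) : IntervalIntegrable w volume p q :=
    hw.intervalIntegrable p q
  rw [← intervalIntegral.integral_add (hint (by fun_prop)) (hint (by fun_prop)),
    ← intervalIntegral.integral_const_mul]
  refine intervalIntegral.integral_mono_on hpq (hint (by fun_prop)) (hint (by fun_prop))
    fun x _ => ?_
  exact (pow_le_pow_left₀ (norm_nonneg _) (norm_add_le (u x) (v x)) 2).trans add_sq_le

lemma integral_norm_sub_sq_le {u v : ℝ → ℂ} (hpq : p ≤ q) (hu : Continuous u) (hv : Continuous v) :
    ∫ x in p..q, ‖u x - v x‖ ^ 2 ≤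
      2 * ((∫ x in p..q, ‖u x‖ ^ 2) + ∫ x in p..q, ‖v x‖ ^ 2) := by
  simpa [sub_eq_add_neg] using integral_norm_add_sq_le hpq hu hv.neg

lemma scaledEnergy_add_le {u v : ℝ → ℂ} (hpq : p ≤ q) (hu : ContDiff ℝ 1 u)
    (hv : ContDiff ℝ 1 v) (l : ℝ) :
    scaledEnergy l p q (u + v) ≤ 2 * (scaledEnergy l p q u + scaledEnergy l p q v) := by
  have hderiv : deriv (u + v) = deriv u + deriv v := funext fun x =>
    deriv_add (hu.differentiable one_ne_zero x) (hv.differentiable one_ne_zero x)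
  have h₀ := mul_le_mul_of_nonneg_left
    (integral_norm_add_sq_le hpq hu.continuous hv.continuous) (sq_nonneg l)
  have h₁ := integral_norm_add_sq_le hpq hu.continuous_deriv_one hv.continuous_deriv_one
  simp only [scaledEnergy, hderiv, Pi.add_apply]
  linarith

lemma integral_norm_lower_order_sq_le {M : ℝ} {w : ℝ → ℂ} (hpq : p ≤ q) (hl : 1 ≤ l)
    (hb : Continuous b) (hc : Continuous c) (hbM : ∀ x ∈ Icc p q, ‖b x‖ ≤ M)
    (hcM : ∀ x ∈ Icc p q, ‖c x‖ ≤ M * l ^ 2) (hw : ContDiff ℝ 1 w) :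
    ∫ x in p..q, ‖b x * deriv w x + c x * w x‖ ^ 2 ≤
      2 * M ^ 2 * l ^ 2 * scaledEnergy l p q w := by
  have hw₀ : Continuous w := hw.continuous
  have hint {u : ℝ → ℝ} (hu : Continuous u) : IntervalIntegrable u volume p q :=
    hu.intervalIntegrable p q
  have hpoint : ∀ x ∈ Icc p q, ‖b x * deriv w x + c x * w x‖ ^ 2 ≤
      2 * M ^ 2 * l ^ 2 * (l ^ 2 * ‖w x‖ ^ 2 + ‖deriv w x‖ ^ 2) := fun x hx => by
    have hbw : ‖b x * deriv w x‖ ≤ M * l * ‖deriv w x‖ := by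
      rw [norm_mul]
      gcongr
      exact (hbM x hx).trans
        (le_mul_of_one_le_right ((norm_nonneg _).trans (hbM x hx)) hl)
    have hcw : ‖c x * w x‖ ≤ M * l ^ 2 * ‖w x‖ := by
      rw [norm_mul]
      gcongr
      exact hcM x hx
    calc ‖b x * deriv w x + c x * w x‖ ^ 2
        ≤ (M * l * ‖deriv w x‖ + M * l ^ 2 * ‖w x‖) ^ 2 := by
          gcongr
          exact (norm_add_le _ _).trans (add_le_add hbw hcw)
      _ ≤ 2 * ((M * l * ‖deriv w x‖) ^ 2 + (M * l ^ 2 * ‖w x‖) ^ 2) := add_sq_le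
      _ = 2 * M ^ 2 * l ^ 2 * (l ^ 2 * ‖w x‖ ^ 2 + ‖deriv w x‖ ^ 2) := by ring
  calc ∫ x in p..q, ‖b x * deriv w x + c x * w x‖ ^ 2
      ≤ ∫ x in p..q, 2 * M ^ 2 * l ^ 2 * (l ^ 2 * ‖w x‖ ^ 2 + ‖deriv w x‖ ^ 2) :=
        intervalIntegral.integral_mono_on hpq (hint (by fun_prop)) (hint (by fun_prop)) hpoint
    _ = 2 * M ^ 2 * l ^ 2 * scaledEnergy l p q w := by
        rw [intervalIntegral.integral_const_mul,
          intervalIntegral.integral_add (hint (by fun_prop)) (hint (by fun_prop)),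
          intervalIntegral.integral_const_mul, scaledEnergy]

lemma IsForcedSolution.sub_contDiff {w : ℝ → ℂ} (hb : Continuous b) (hc : Continuous c)
    (hf : IsForcedSolution b c p q f φ ψ) (hw : ContDiff ℝ 2 w) :
    IsForcedSolution b c p q (f - w) (fun x => φ x - (b x * deriv w x + c x * w x))
      (fun x => ψ x - deriv w x) where
  contDiff := hf.contDiff.sub hw
  continuous_forcing := by
    have hw₀ : Continuous w := hw.continuous
    have hw₁ : Continuous (deriv w) := hw.continuous_deriv (by norm_num)
    have hφ : Continuous φ := hf.continuous_forcing
    fun_prop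
  contDiff_flux := hf.contDiff_flux.sub (contDiff_succ_iff_deriv.mp hw).2.2
  eqn x hx := by
    have hderiv : deriv (f - w) = deriv f - deriv w := funext fun t =>
      deriv_sub (hf.contDiff.differentiable two_ne_zero t) (hw.differentiable two_ne_zero t)
    have hderiv₂ : deriv (deriv f - deriv w) x = deriv (deriv f) x - deriv (deriv w) x :=
      ((hasDerivAt_deriv_of_contDiff_two hf.contDiff x).sub
        (hasDerivAt_deriv_of_contDiff_two hw x)).deriv
    have hflux : deriv (fun t => ψ t - deriv w t) x = deriv ψ x - deriv (deriv w) x :=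
      ((hf.contDiff_flux.differentiable one_ne_zero x).hasDerivAt.sub
        (hasDerivAt_deriv_of_contDiff_two hw x)).deriv
    rw [hderiv, hderiv₂, hflux, Pi.sub_apply, Pi.sub_apply]
    linear_combination hf.eqn x hx

lemma scaledEnergy_nonneg (hpq : p ≤ q) (l : ℝ) (f : ℝ → ℂ) : 0 ≤ scaledEnergy l p q f := by
  have hf := integral_norm_sq_nonneg hpq f
  have hf' := integral_norm_sq_nonneg hpq (deriv f)
  unfold scaledEnergy
  positivity

lemma scaledEnergy_le_inv_mul {α : ℝ} (hpq : p ≤ q) (hα : 0 < α) (hα₁ : α ≤ 1) (l : ℝ) (f : ℝ → ℂ) :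
    scaledEnergy l p q f ≤
      α⁻¹ * (α * l ^ 2 * (∫ x in p..q, ‖f x‖ ^ 2) + ∫ x in p..q, ‖deriv f x‖ ^ 2) := by
  have hf' := le_mul_of_one_le_left (integral_norm_sq_nonneg hpq (deriv f))
    ((one_le_inv₀ hα).mpr hα₁)
  rw [scaledEnergy, mul_add, mul_assoc, inv_mul_cancel_left₀ hα.ne']
  linarith

lemma IsForcedSolution.scaledEnergy_sub_le {α M : ℝ} {w : ℝ → ℂ} (hpq : p ≤ q) (hl : 1 ≤ l)
    (hα : 0 < α) (hα₁ : α ≤ 1) (hM : 4 * M ^ 2 ≤ α * l ^ 2) (hb : Continuous b)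
    (hc : Continuous c) (hbM : ∀ x ∈ Icc p q, ‖b x‖ ≤ M) (hcM : ∀ x ∈ Icc p q, ‖c x‖ ≤ M * l ^ 2)
    (hcα : ∀ x ∈ Icc p q, (c x).re ≤ -(α * l ^ 2)) (hf : IsForcedSolution b c p q f φ ψ)
    (hw : ContDiff ℝ 2 w) (hwp : w p = f p) (hwq : w q = f q) :
    scaledEnergy l p q (f - w) ≤ 4 * α⁻¹ ^ 2 * ((l ^ 2)⁻¹ * (∫ x in p..q, ‖φ x‖ ^ 2) +
      (∫ x in p..q, ‖ψ x‖ ^ 2) + (2 * M ^ 2 + 1) * scaledEnergy l p q w) := by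
  have hw₁ : ContDiff ℝ 1 w := hw.of_le one_le_two
  have hw' : Continuous (deriv w) := hw₁.continuous_deriv_one
  have hφ : Continuous φ := hf.continuous_forcing
  have hψ : Continuous ψ := hf.contDiff_flux.continuous
  set W := scaledEnergy l p q w with hW
  have hforcing : ∫ x in p..q, ‖φ x - (b x * deriv w x + c x * w x)‖ ^ 2 ≤
      2 * ((∫ x in p..q, ‖φ x‖ ^ 2) + 2 * M ^ 2 * l ^ 2 * W) :=
    (integral_norm_sub_sq_le hpq hφ (by fun_prop)).trans <| by
      gcongr
      exact integral_norm_lower_order_sq_le hpq hl hb hc hbM hcM hw₁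
  have hflux : ∫ x in p..q, ‖ψ x - deriv w x‖ ^ 2 ≤ 2 * α⁻¹ * ((∫ x in p..q, ‖ψ x‖ ^ 2) + W) :=
    calc ∫ x in p..q, ‖ψ x - deriv w x‖ ^ 2
        ≤ 2 * ((∫ x in p..q, ‖ψ x‖ ^ 2) + ∫ x in p..q, ‖deriv w x‖ ^ 2) :=
          integral_norm_sub_sq_le hpq hψ hw'
      _ ≤ 2 * 1 * ((∫ x in p..q, ‖ψ x‖ ^ 2) + W) := by
          rw [mul_one, hW, scaledEnergy]
          gcongr
          exact le_add_of_nonneg_left (mul_nonneg (sq_nonneg l) (integral_norm_sq_nonneg hpq w))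
      _ ≤ 2 * α⁻¹ * ((∫ x in p..q, ‖ψ x‖ ^ 2) + W) := by
          have := integral_norm_sq_nonneg hpq ψ
          have := scaledEnergy_nonneg hpq l w
          gcongr
          exact (one_le_inv₀ hα).mpr hα₁
  calc scaledEnergy l p q (f - w)
      ≤ α⁻¹ * (α * l ^ 2 * (∫ x in p..q, ‖(f - w) x‖ ^ 2) +
          ∫ x in p..q, ‖deriv (f - w) x‖ ^ 2) := scaledEnergy_le_inv_mul hpq hα hα₁ l _
    _ ≤ α⁻¹ * (2 * ((α * l ^ 2)⁻¹ * (2 * ((∫ x in p..q, ‖φ x‖ ^ 2) + 2 * M ^ 2 * l ^ 2 * W)) +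
          2 * α⁻¹ * ((∫ x in p..q, ‖ψ x‖ ^ 2) + W))) := by
        gcongr
        refine ((hf.sub_contDiff hb hc hw).energy_le_of_re_le_neg hpq (by positivity) hM hb hc hbM
          hcα (by simp [hwp]) (by simp [hwq])).trans ?_
        gcongr
    _ = _ := by
        field_simp
        ring

theorem IsForcedSolution.scaledEnergy_le_of_re_le_neg {α M : ℝ} (hpq : p < q) (hl : 1 ≤ l)
    (hα : 0 < α) (hα₁ : α ≤ 1) (hM : 4 * M ^ 2 ≤ α * l ^ 2) (hb : Continuous b)
    (hc : Continuous c) (hbM : ∀ x ∈ Icc p q, ‖b x‖ ≤ M) (hcM : ∀ x ∈ Icc p q, ‖c x‖ ≤ M * l ^ 2)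
    (hcα : ∀ x ∈ Icc p q, (c x).re ≤ -(α * l ^ 2)) (hf : IsForcedSolution b c p q f φ ψ) :
    scaledEnergy l p q f ≤
      16 * α⁻¹ ^ 2 * (M ^ 2 + 1) * (1 + 2 / (q - p)) * scaledData l p q f φ ψ := by
  have hl₀ : 0 < l := one_pos.trans_le hl
  set w := sinhLift l p q (f p) (f q)
  have hw : ContDiff ℝ 2 w := contDiff_sinhLift (f p) (f q) l p q
  have hsub := hf.scaledEnergy_sub_le hpq.le hl hα hα₁ hM hb hc hbM hcM hcα hw
    (sinhLift_left _ _ hl₀ hpq) (sinhLift_right _ _ hl₀ hpq)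
  have hadd : scaledEnergy l p q f ≤ 2 * (scaledEnergy l p q (f - w) + scaledEnergy l p q w) := by
    simpa only [sub_add_cancel] using scaledEnergy_add_le (u := f - w) hpq.le
      ((hf.contDiff.sub hw).of_le one_le_two) (hw.of_le one_le_two) l
  set Λ := 1 + 2 / (q - p)
  have hΛ₁ : 1 ≤ Λ := le_add_of_nonneg_right (div_pos two_pos (sub_pos.mpr hpq)).le
  set S := (l ^ 2)⁻¹ * (∫ x in p..q, ‖φ x‖ ^ 2) + ∫ x in p..q, ‖ψ x‖ ^ 2 with hS
  have hS₀ : 0 ≤ S := by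
    have hφ₀ := integral_norm_sq_nonneg hpq.le φ
    have hψ₀ := integral_norm_sq_nonneg hpq.le ψ
    positivity
  set B := l * (‖f p‖ ^ 2 + ‖f q‖ ^ 2) with hB
  have hW : scaledEnergy l p q w ≤ Λ * B := scaledEnergy_sinhLift_le_of_one_le _ _ hl hpq
  have hα_inv : 1 ≤ α⁻¹ ^ 2 := one_le_pow₀ ((one_le_inv₀ hα).mpr hα₁)
  calc scaledEnergy l p q f
      ≤ 2 * (4 * α⁻¹ ^ 2 * (S + (2 * M ^ 2 + 1) * scaledEnergy l p q w) +
          α⁻¹ ^ 2 * scaledEnergy l p q w) := by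
        refine hadd.trans ?_
        gcongr
        exact le_mul_of_one_le_left (scaledEnergy_nonneg hpq.le l w) hα_inv
    _ ≤ 8 * α⁻¹ ^ 2 * (S + 2 * (M ^ 2 + 1) * scaledEnergy l p q w) := by
        have := mul_nonneg (sq_nonneg α⁻¹) (scaledEnergy_nonneg hpq.le l w)
        linarith
    _ ≤ 8 * α⁻¹ ^ 2 * (2 * (M ^ 2 + 1) * (Λ * S) + 2 * (M ^ 2 + 1) * (Λ * B)) := by
        have hone : 1 ≤ 2 * (M ^ 2 + 1) * Λ := by nlinarith [sq_nonneg M]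
        gcongr
        rw [← mul_assoc]
        exact le_mul_of_one_le_left hS₀ hone
    _ = 16 * α⁻¹ ^ 2 * (M ^ 2 + 1) * Λ * scaledData l p q f φ ψ := by
        rw [scaledData, ← hB, add_assoc, ← hS]
        ring

lemma scaledEnergy_le_sq_mul (hpq : p ≤ q) (hl : 1 ≤ l) (f : ℝ → ℂ) :
    scaledEnergy l p q f ≤ l ^ 2 * scaledEnergy 1 p q f := by
  have hf' := le_mul_of_one_le_left (integral_norm_sq_nonneg hpq (deriv f))
    (one_le_pow₀ hl (n := 2))
  unfold scaledEnergy
  linarith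

lemma scaledData_one_le_sq_mul (hpq : p ≤ q) (hl : 1 ≤ l) (f φ ψ : ℝ → ℂ) :
    scaledData 1 p q f φ ψ ≤ l ^ 2 * scaledData l p q f φ ψ := by
  have hl₀ : l ≠ 0 := (one_pos.trans_le hl).ne'
  have hboundary : 1 * (‖f p‖ ^ 2 + ‖f q‖ ^ 2) ≤ l ^ 3 * (‖f p‖ ^ 2 + ‖f q‖ ^ 2) := by
    gcongr
    exact one_le_pow₀ hl
  have hψ := le_mul_of_one_le_left (integral_norm_sq_nonneg hpq ψ) (one_le_pow₀ hl (n := 2))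
  have hexpand : l ^ 2 * scaledData l p q f φ ψ = l ^ 3 * (‖f p‖ ^ 2 + ‖f q‖ ^ 2) +
      (∫ x in p..q, ‖φ x‖ ^ 2) + l ^ 2 * ∫ x in p..q, ‖ψ x‖ ^ 2 := by
    unfold scaledData
    field_simp
  rw [hexpand, scaledData, one_pow, inv_one, one_mul (∫ x in p..q, ‖φ x‖ ^ 2)]
  linarith

lemma sqrt_integral_add_le_sqrt_scaledEnergy (hpq : p ≤ q) (hl : 0 < l) (f : ℝ → ℂ) :
    √(∫ x in p..q, ‖f x‖ ^ 2) + l⁻¹ * √(∫ x in p..q, ‖deriv f x‖ ^ 2) ≤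
      √2 * (l⁻¹ * √(scaledEnergy l p q f)) := by
  have hf := Real.sq_sqrt (integral_norm_sq_nonneg hpq f)
  have hf' := Real.sq_sqrt (integral_norm_sq_nonneg hpq (deriv f))
  have henergy := Real.sq_sqrt (scaledEnergy_nonneg hpq l f)
  refine le_of_sq_le_sq (add_sq_le.trans_eq ?_) (by positivity)
  rw [mul_pow, mul_pow, mul_pow, hf, hf', henergy, Real.sq_sqrt two_pos.le, scaledEnergy]
  field_simp

lemma inv_mul_sqrt_scaledData_le (hpq : p ≤ q) (hl : 0 < l) (f φ ψ : ℝ → ℂ) :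
    l⁻¹ * √(scaledData l p q f φ ψ) ≤ l ^ (-(1 : ℝ) / 2) * (‖f p‖ + ‖f q‖) +
      l⁻¹ ^ 2 * √(∫ x in p..q, ‖φ x‖ ^ 2) + l⁻¹ * √(∫ x in p..q, ‖ψ x‖ ^ 2) := by
  have hpow : (l ^ (-(1 : ℝ) / 2)) ^ 2 = l⁻¹ := by
    rw [← Real.rpow_natCast, ← Real.rpow_mul hl.le, ← Real.rpow_neg_one]
    norm_num
  have hφ := Real.sq_sqrt (integral_norm_sq_nonneg hpq φ)
  have hψ := Real.sq_sqrt (integral_norm_sq_nonneg hpq ψ)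
  have hdata := Real.sq_sqrt (scaledData_nonneg hl.le hpq f φ ψ)
  refine le_of_sq_le_sq ?_ (by positivity)
  have hexpand : (l⁻¹ * √(scaledData l p q f φ ψ)) ^ 2 =
      (l ^ (-(1 : ℝ) / 2) * ‖f p‖) ^ 2 + (l ^ (-(1 : ℝ) / 2) * ‖f q‖) ^ 2 +
        (l⁻¹ ^ 2 * √(∫ x in p..q, ‖φ x‖ ^ 2)) ^ 2 + (l⁻¹ * √(∫ x in p..q, ‖ψ x‖ ^ 2)) ^ 2 := by
    rw [mul_pow, hdata, mul_pow, mul_pow, mul_pow, mul_pow, hpow, hφ, hψ, scaledData]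
    field_simp
  have hsum {x₁ x₂ x₃ x₄ : ℝ} (h₁ : 0 ≤ x₁) (h₂ : 0 ≤ x₂) (h₃ : 0 ≤ x₃) (h₄ : 0 ≤ x₄) :
      x₁ ^ 2 + x₂ ^ 2 + x₃ ^ 2 + x₄ ^ 2 ≤ (x₁ + x₂ + x₃ + x₄) ^ 2 := by
    have hcross : 0 ≤ x₁ * x₂ + x₁ * x₃ + x₁ * x₄ + x₂ * x₃ + x₂ * x₄ + x₃ * x₄ := by positivity
    linarith
  rw [hexpand, mul_add]
  exact hsum (by positivity) (by positivity) (by positivity) (by positivity)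

end SecondOrder

section Hop

/-- The bracket `⟨ζ⟩ = (1 + |ζ|²)^{1/2}`. -/
noncomputable def japaneseBracket (ζ : ℂ) : ℝ :=
  √(1 + ‖ζ‖ ^ 2)

lemma sq_japaneseBracket (ζ : ℂ) : japaneseBracket ζ ^ 2 = 1 + ‖ζ‖ ^ 2 :=
  Real.sq_sqrt (by positivity)

lemma one_le_japaneseBracket (ζ : ℂ) : 1 ≤ japaneseBracket ζ :=
  Real.one_le_sqrt.mpr (le_add_of_nonneg_right (sq_nonneg _))

lemma norm_le_japaneseBracket (ζ : ℂ) : ‖ζ‖ ≤ japaneseBracket ζ :=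
  Real.le_sqrt_of_sq_le (le_add_of_nonneg_left zero_le_one)

lemma re_sq_le_sub_sq_japaneseBracket {ζ : ℂ} {σ : ℝ} (hζ : |ζ.re| ≤ σ) :
    (ζ ^ 2).re ≤ 2 * σ ^ 2 + 1 - japaneseBracket ζ ^ 2 := by
  have hre : ζ.re ^ 2 ≤ σ ^ 2 := sq_le_sq' (abs_le.mp hζ).1 (abs_le.mp hζ).2
  rw [sq_japaneseBracket, Complex.sq_norm, Complex.normSq_apply, sq ζ, Complex.mul_re]
  linarith

section Quadratic

variable {ζ e v : ℂ} {y M : ℝ}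

lemma norm_quadratic_le (hy₀ : 0 ≤ y) (hy : y ≤ M) (he : ‖e‖ ≤ M) (hv : ‖v‖ ≤ M) :
    ‖ζ ^ 2 * y + ζ * e + v‖ ≤ 3 * M * japaneseBracket ζ ^ 2 := by
  have hJ := one_le_japaneseBracket ζ
  have hζ := norm_le_japaneseBracket ζ
  have hM : 0 ≤ M := hy₀.trans hy
  calc ‖ζ ^ 2 * y + ζ * e + v‖ ≤ ‖ζ‖ ^ 2 * y + ‖ζ‖ * ‖e‖ + ‖v‖ := by
        refine norm_add₃_le.trans_eq ?_
        rw [norm_mul, norm_mul, norm_pow, Complex.norm_of_nonneg hy₀]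
    _ ≤ japaneseBracket ζ ^ 2 * M + japaneseBracket ζ * M + M := by gcongr
    _ ≤ japaneseBracket ζ ^ 2 * M + japaneseBracket ζ ^ 2 * M + japaneseBracket ζ ^ 2 * M := by
        gcongr
        · exact le_self_pow₀ hJ two_ne_zero
        · exact le_mul_of_one_le_left hM (one_le_pow₀ hJ)
    _ = 3 * M * japaneseBracket ζ ^ 2 := by ring

lemma re_quadratic_le {m σ : ℝ} (hm : 0 ≤ m) (hmy : m ≤ y) (hy : y ≤ M) (he : ‖e‖ ≤ M)
    (hv : ‖v‖ ≤ M) (hζ : |ζ.re| ≤ σ) :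
    (ζ ^ 2 * y + ζ * e + v).re ≤
      (2 * σ ^ 2 + 3) * M * japaneseBracket ζ - m * japaneseBracket ζ ^ 2 := by
  have hJ := one_le_japaneseBracket ζ
  have hM : 0 ≤ M := hm.trans (hmy.trans hy)
  have hsq : (ζ ^ 2).re * y ≤ (2 * σ ^ 2 + 1) * M - m * japaneseBracket ζ ^ 2 :=
    calc (ζ ^ 2).re * y ≤ (2 * σ ^ 2 + 1 - japaneseBracket ζ ^ 2) * y := by
          gcongr
          · exact hm.trans hmy
          · exact re_sq_le_sub_sq_japaneseBracket hζ
      _ = (2 * σ ^ 2 + 1) * y - y * japaneseBracket ζ ^ 2 := by ring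
      _ ≤ (2 * σ ^ 2 + 1) * M - m * japaneseBracket ζ ^ 2 := by gcongr
  have hlin : (ζ * e).re ≤ japaneseBracket ζ * M :=
    calc (ζ * e).re ≤ ‖ζ‖ * ‖e‖ := (Complex.re_le_norm _).trans_eq (norm_mul _ _)
      _ ≤ japaneseBracket ζ * M := by
          gcongr
          exact norm_le_japaneseBracket ζ
  have hconst : (2 * σ ^ 2 + 2) * M ≤ (2 * σ ^ 2 + 2) * M * japaneseBracket ζ :=
    le_mul_of_one_le_right (by positivity) hJ
  rw [Complex.add_re, Complex.add_re, Complex.re_mul_ofReal]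
  linarith [(Complex.re_le_norm v).trans hv]

end Quadratic

/-- The coefficient of `f x` in `Hop a β₁ β₂ β₃ ζ f x`. -/
noncomputable def hopPotential (a : ℝ → ℝ) (β₁ β₂ β₃ : ℝ → ℂ) (ζ : ℂ) (x : ℝ) : ℂ :=
  ζ ^ 2 * (a x ^ 2 : ℝ) + ζ * (Complex.I * (a x * (β₁ x - β₂ x) - deriv a x)) + β₃ x

variable {a : ℝ → ℝ} {β₁ β₂ β₃ : ℝ → ℂ}

lemma Hop_eq_hopPotential (ζ : ℂ) (f : ℝ → ℂ) (x : ℝ) :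
    Hop a β₁ β₂ β₃ ζ f x =
      deriv (deriv f) x + (β₁ + β₂) x * deriv f x + hopPotential a β₁ β₂ β₃ ζ x * f x := by
  rw [Hop, hopPotential, Pi.add_apply]
  push_cast
  ring

lemma dirichletInjective_of_notMem_frakS {r : ℝ} {ζ : ℂ} (hζ : ζ ∉ frakS r a β₁ β₂ β₃) :
    DirichletInjective (β₁ + β₂) (hopPotential a β₁ β₂ β₃ ζ) (-r) r := by
  intro g hg hgp hgq
  by_contra! hne
  refine hζ ⟨g, hg.contDiff, hne, fun x hx => ?_, hgp, hgq⟩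
  rw [Hop_eq_hopPotential, hg.eqn x hx]
  simp

variable {p q : ℝ}

lemma continuous_hopPotential (ha : ContDiff ℝ 1 a) (hβ₁ : Continuous β₁) (hβ₂ : Continuous β₂)
    (hβ₃ : Continuous β₃) : Continuous (Function.uncurry (hopPotential a β₁ β₂ β₃)) := by
  have ha₀ : Continuous a := ha.continuous
  unfold hopPotential Function.uncurry
  fun_prop

lemma exists_pos_le_sq_of_ne_zero (ha : Continuous a) (ha₀ : ∀ x ∈ Icc p q, a x ≠ 0) :
    ∃ m, 0 < m ∧ m ≤ 1 ∧ ∀ x ∈ Icc p q, m ≤ a x ^ 2 := by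
  obtain ⟨m, hm, hle⟩ := isCompact_Icc.exists_forall_le' (ha.pow 2).continuousOn
    fun x hx => sq_pos_of_ne_zero (ha₀ x hx)
  exact ⟨min m 1, lt_min hm one_pos, min_le_right _ _,
    fun x hx => (min_le_left _ _).trans (hle x hx)⟩

lemma exists_bound_hopPotential_coefficients (p q : ℝ) (ha : ContDiff ℝ 1 a) (hβ₁ : Continuous β₁)
    (hβ₂ : Continuous β₂) (hβ₃ : Continuous β₃) :
    ∃ M, 0 ≤ M ∧ ∀ x ∈ Icc p q, a x ^ 2 ≤ M ∧
      ‖Complex.I * (a x * (β₁ x - β₂ x) - deriv a x)‖ ≤ M ∧ ‖β₃ x‖ ≤ M ∧ ‖(β₁ + β₂) x‖ ≤ M := by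
  have ha₀ : Continuous a := ha.continuous
  have hsum : Continuous fun x => a x ^ 2 + ‖Complex.I * (a x * (β₁ x - β₂ x) - deriv a x)‖ +
      ‖β₃ x‖ + ‖(β₁ + β₂) x‖ := by fun_prop
  obtain ⟨M, hM⟩ := isCompact_Icc.exists_bound_of_continuousOn (hsum.continuousOn (s := Icc p q))
  refine ⟨|M|, abs_nonneg M, fun x hx => ?_⟩
  have hle := (le_abs_self _).trans ((hM x hx).trans (le_abs_self M))
  have h₁ := sq_nonneg (a x)
  have h₂ := norm_nonneg (Complex.I * (a x * (β₁ x - β₂ x) - deriv a x))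
  have h₃ := norm_nonneg (β₃ x)
  have h₄ := norm_nonneg ((β₁ + β₂) x)
  exact ⟨by linarith, by linarith, by linarith, by linarith⟩

lemma exists_scaledEnergy_le_of_large (hpq : p < q) (ha : ContDiff ℝ 1 a)
    (ha₀ : ∀ x ∈ Icc p q, a x ≠ 0) (hβ₁ : Continuous β₁) (hβ₂ : Continuous β₂)
    (hβ₃ : Continuous β₃) (σ : ℝ) :
    ∃ R K, 0 ≤ K ∧ ∀ ζ : ℂ, |ζ.re| ≤ σ → R ≤ japaneseBracket ζ → ∀ f φ ψ,
      IsForcedSolution (β₁ + β₂) (hopPotential a β₁ β₂ β₃ ζ) p q f φ ψ →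
        scaledEnergy (japaneseBracket ζ) p q f ≤ K * scaledData (japaneseBracket ζ) p q f φ ψ := by
  obtain ⟨m, hm, hm₁, hma⟩ := exists_pos_le_sq_of_ne_zero ha.continuous ha₀
  obtain ⟨M, hM₀, hM⟩ := exists_bound_hopPotential_coefficients p q ha hβ₁ hβ₂ hβ₃
  refine ⟨2 * (2 * σ ^ 2 + 3) * M / (m / 2),
    16 * (m / 2)⁻¹ ^ 2 * ((3 * M) ^ 2 + 1) * (1 + 2 / (q - p)), by positivity,
    fun ζ hζ hR f φ ψ hf => ?_⟩
  set J := japaneseBracket ζ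
  have hJ : 1 ≤ J := one_le_japaneseBracket ζ
  have hlarge : 2 * (2 * σ ^ 2 + 3) * M ≤ m / 2 * J :=
    (div_le_iff₀' (half_pos hm)).mp hR
  have hmass : 4 * (3 * M) ^ 2 ≤ m / 2 * J ^ 2 :=
    calc 4 * (3 * M) ^ 2 ≤ (2 * (2 * σ ^ 2 + 3) * M) ^ 2 := by
          rw [show 4 * (3 * M) ^ 2 = (2 * 3 * M) ^ 2 by ring]
          gcongr
          exact le_add_of_nonneg_left (by positivity)
      _ ≤ (m / 2 * J) ^ 2 := by gcongr
      _ = (m / 2) ^ 2 * J ^ 2 := mul_pow _ _ _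
      _ ≤ m / 2 * J ^ 2 := by
          gcongr
          exact pow_le_of_le_one (half_pos hm).le (by linarith) two_ne_zero
  refine hf.scaledEnergy_le_of_re_le_neg hpq hJ (half_pos hm) (by linarith) hmass
    (hβ₁.add hβ₂) ((continuous_hopPotential ha hβ₁ hβ₂ hβ₃).uncurry_left ζ)
    (fun x hx => ?_) (fun x hx => ?_) (fun x hx => ?_) <;>
    obtain ⟨hax, hex, hvx, hbx⟩ := hM x hx
  · linarith
  · exact norm_quadratic_le (sq_nonneg _) hax hex hvx
  · have hre := re_quadratic_le hm.le (hma x hx) hax hex hvx hζ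
    have hlarge' : (2 * σ ^ 2 + 3) * M * J ≤ m / 2 * J ^ 2 := by
      nlinarith
    rw [hopPotential]
    linarith

lemma exists_scaledEnergy_le_of_bounded (hpq : p < q) (ha : ContDiff ℝ 1 a) (hβ₁ : Continuous β₁)
    (hβ₂ : Continuous β₂) (hβ₃ : Continuous β₃) {Z : Set ℂ} (hZ : IsClosed Z)
    (hinj : ∀ ζ ∈ Z, DirichletInjective (β₁ + β₂) (hopPotential a β₁ β₂ β₃ ζ) p q) (R : ℝ) :
    ∃ K, 0 ≤ K ∧ ∀ ζ ∈ Z, japaneseBracket ζ ≤ R → ∀ f φ ψ,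
      IsForcedSolution (β₁ + β₂) (hopPotential a β₁ β₂ β₃ ζ) p q f φ ψ →
        scaledEnergy (japaneseBracket ζ) p q f ≤ K * scaledData (japaneseBracket ζ) p q f φ ψ := by
  obtain ⟨K, hK₀, hK⟩ := exists_scaledEnergy_one_le_of_isCompact (hβ₁.add hβ₂)
    (continuous_hopPotential ha hβ₁ hβ₂ hβ₃) hpq ((isCompact_closedBall 0 R).inter_left hZ)
    fun ζ hζ => hinj ζ hζ.1
  refine ⟨R ^ 2 * (K * R ^ 2), by positivity, fun ζ hζ hR f φ ψ hf => ?_⟩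
  have hζ_ball : ζ ∈ Metric.closedBall 0 R :=
    mem_closedBall_zero_iff.mpr ((norm_le_japaneseBracket ζ).trans hR)
  set J := japaneseBracket ζ
  have hJ : 1 ≤ J := one_le_japaneseBracket ζ
  have hdata : 0 ≤ scaledData J p q f φ ψ := scaledData_nonneg (zero_le_one.trans hJ) hpq.le f φ ψ
  calc scaledEnergy J p q f ≤ J ^ 2 * scaledEnergy 1 p q f := scaledEnergy_le_sq_mul hpq.le hJ f
    _ ≤ J ^ 2 * (K * (J ^ 2 * scaledData J p q f φ ψ)) := by
        gcongr
        refine (hK ζ ⟨hζ, hζ_ball⟩ f φ ψ hf).trans ?_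
        gcongr
        exact scaledData_one_le_sq_mul hpq.le hJ f φ ψ
    _ ≤ R ^ 2 * (K * (R ^ 2 * scaledData J p q f φ ψ)) := by gcongr
    _ = R ^ 2 * (K * R ^ 2) * scaledData J p q f φ ψ := by ring

theorem exists_scaledEnergy_japaneseBracket_le (hpq : p < q) (ha : ContDiff ℝ 1 a)
    (ha₀ : ∀ x ∈ Icc p q, a x ≠ 0) (hβ₁ : Continuous β₁) (hβ₂ : Continuous β₂)
    (hβ₃ : Continuous β₃) {Z : Set ℂ} (hZ : IsClosed Z) {σ : ℝ} (hσ : ∀ ζ ∈ Z, |ζ.re| ≤ σ)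
    (hinj : ∀ ζ ∈ Z, DirichletInjective (β₁ + β₂) (hopPotential a β₁ β₂ β₃ ζ) p q) :
    ∃ K, 0 ≤ K ∧ ∀ ζ ∈ Z, ∀ f φ ψ,
      IsForcedSolution (β₁ + β₂) (hopPotential a β₁ β₂ β₃ ζ) p q f φ ψ →
        scaledEnergy (japaneseBracket ζ) p q f ≤ K * scaledData (japaneseBracket ζ) p q f φ ψ := by
  obtain ⟨R, K₁, hK₁, hlarge⟩ := exists_scaledEnergy_le_of_large hpq ha ha₀ hβ₁ hβ₂ hβ₃ σ
  obtain ⟨K₂, -, hbounded⟩ := exists_scaledEnergy_le_of_bounded hpq ha hβ₁ hβ₂ hβ₃ hZ hinj R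
  refine ⟨max K₁ K₂, le_max_of_le_left hK₁, fun ζ hζ f φ ψ hf => ?_⟩
  have hdata : 0 ≤ scaledData (japaneseBracket ζ) p q f φ ψ :=
    scaledData_nonneg (zero_le_one.trans (one_le_japaneseBracket ζ)) hpq.le f φ ψ
  rcases le_total R (japaneseBracket ζ) with hR | hR
  · exact (hlarge ζ (hσ ζ hζ) hR f φ ψ hf).trans (by gcongr; exact le_max_left _ _)
  · exact (hbounded ζ hζ hR f φ ψ hf).trans (by gcongr; exact le_max_right _ _)

lemma L2_Icc_eq_sqrt_integral (hpq : p ≤ q) (f : ℝ → ℂ) :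
    L2 f (Icc p q) = √(∫ x in p..q, ‖f x‖ ^ 2) := by
  rw [L2, Real.sqrt_eq_rpow, integral_Icc_eq_integral_Ioc, intervalIntegral.integral_of_le hpq]

lemma L2_add_inv_mul_L2_deriv_le {l K : ℝ} {f φ ψ : ℝ → ℂ} (hpq : p ≤ q) (hl : 0 < l) (hK : 0 ≤ K)
    (h : scaledEnergy l p q f ≤ K * scaledData l p q f φ ψ) :
    L2 f (Icc p q) + l⁻¹ * L2 (deriv f) (Icc p q) ≤
      √2 * √K * l ^ (-(1 : ℝ) / 2) * (‖f p‖ + ‖f q‖) +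
        √2 * √K * l⁻¹ ^ 2 * L2 φ (Icc p q) + √2 * √K * l⁻¹ * L2 ψ (Icc p q) := by
  simp only [L2_Icc_eq_sqrt_integral hpq]
  calc √(∫ x in p..q, ‖f x‖ ^ 2) + l⁻¹ * √(∫ x in p..q, ‖deriv f x‖ ^ 2)
      ≤ √2 * (l⁻¹ * √(scaledEnergy l p q f)) := sqrt_integral_add_le_sqrt_scaledEnergy hpq hl f
    _ ≤ √2 * (l⁻¹ * √(K * scaledData l p q f φ ψ)) := by gcongr
    _ = √2 * √K * (l⁻¹ * √(scaledData l p q f φ ψ)) := by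
        rw [Real.sqrt_mul hK]
        ring
    _ ≤ √2 * √K * (l ^ (-(1 : ℝ) / 2) * (‖f p‖ + ‖f q‖) +
          l⁻¹ ^ 2 * √(∫ x in p..q, ‖φ x‖ ^ 2) + l⁻¹ * √(∫ x in p..q, ‖ψ x‖ ^ 2)) := by
        gcongr
        exact inv_mul_sqrt_scaledData_le hpq hl f φ ψ
    _ = _ := by ring

end Hop

theorem lemma4_estimate_general {r : ℝ} (hr : 0 < r) {a : ℝ → ℝ} (ha : ContDiff ℝ 1 a)
    (ha₀ : ∀ x ∈ Icc (-r) r, a x ≠ 0) {β₁ β₂ β₃ : ℝ → ℂ} (hβ₁ : Continuous β₁)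
    (hβ₂ : Continuous β₂) (hβ₃ : Continuous β₃) {Z : Set ℂ} (hZ : IsClosed Z) {σ : ℝ}
    (hσ : ∀ ζ ∈ Z, |ζ.re| ≤ σ) (hdisj : Disjoint Z (frakS r a β₁ β₂ β₃)) :
    ∃ C : ℝ, ∀ ζ ∈ Z, ∀ f φ ψ : ℝ → ℂ, ContDiff ℝ 2 f → Continuous φ → ContDiff ℝ 1 ψ →
      (∀ x ∈ Icc (-r) r, Hop a β₁ β₂ β₃ ζ f x = φ x + deriv ψ x) →
      L2 f (Icc (-r) r) + (√(1 + ‖ζ‖ ^ 2))⁻¹ * L2 (deriv f) (Icc (-r) r) ≤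
        C * √(1 + ‖ζ‖ ^ 2) ^ (-(1 : ℝ) / 2) * (‖f (-r)‖ + ‖f r‖) +
          C * (√(1 + ‖ζ‖ ^ 2))⁻¹ ^ 2 * L2 φ (Icc (-r) r) +
          C * (√(1 + ‖ζ‖ ^ 2))⁻¹ * L2 ψ (Icc (-r) r) := by
  have hpq : -r < r := neg_lt_self hr
  obtain ⟨K, hK, hbound⟩ := exists_scaledEnergy_japaneseBracket_le hpq ha ha₀ hβ₁ hβ₂ hβ₃ hZ hσ
    fun ζ hζ => dirichletInjective_of_notMem_frakS (hdisj.notMem_of_mem_left hζ)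
  refine ⟨√2 * √K, fun ζ hζ f φ ψ hf hφ hψ heq => ?_⟩
  have hsol : IsForcedSolution (β₁ + β₂) (hopPotential a β₁ β₂ β₃ ζ) (-r) r f φ ψ :=
    ⟨hf, hφ, hψ, fun x hx => (Hop_eq_hopPotential ζ f x).symm.trans (heq x hx)⟩
  exact L2_add_inv_mul_L2_deriv_le hpq.le (one_pos.trans_le (one_le_japaneseBracket ζ)) hK
    (hbound ζ hζ f φ ψ hsol)

/-- The a priori estimate of Lemma 4: if no element of `𝔖` has real part `s`, then
solutions of `H_ζ f = φ + ψ'` on `I`, `ζ = s + iγ`, obey a uniform estimate. -/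
theorem lemma4_estimate (r : ℝ) (hr : 0 < r) (a : ℝ → ℝ) (ha : ContDiff ℝ (⊤ : ℕ∞) a)
    (ha0 : ∀ x ∈ Icc (-r) r, a x ≠ 0)
    (β₁ β₂ β₃ : ℝ → ℂ) (hβ₁ : ContDiff ℝ (⊤ : ℕ∞) β₁) (hβ₂ : ContDiff ℝ (⊤ : ℕ∞) β₂)
    (hβ₃ : ContDiff ℝ (⊤ : ℕ∞) β₃)
    (s : ℝ) (hs : ∀ ζ ∈ frakS r a β₁ β₂ β₃, ζ.re ≠ s) :
    ∃ C : ℝ, ∀ γ : ℝ, ∀ f φ ψ : ℝ → ℂ,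
      ContDiff ℝ (⊤ : ℕ∞) f → ContDiff ℝ (⊤ : ℕ∞) φ → ContDiff ℝ (⊤ : ℕ∞) ψ →
      (∀ x ∈ Icc (-r) r,
        Hop a β₁ β₂ β₃ (Complex.mk s γ) f x = φ x + deriv ψ x) →
      L2 f (Icc (-r) r)
        + (Real.sqrt (1 + ‖(Complex.mk s γ)‖ ^ 2))⁻¹ * L2 (deriv f) (Icc (-r) r)
      ≤ C * (Real.sqrt (1 + ‖(Complex.mk s γ)‖ ^ 2)) ^ (-(1 : ℝ)/2) * (‖f (-r)‖ + ‖f r‖)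
        + C * ((Real.sqrt (1 + ‖(Complex.mk s γ)‖ ^ 2))⁻¹) ^ 2 * L2 φ (Icc (-r) r)
        + C * (Real.sqrt (1 + ‖(Complex.mk s γ)‖ ^ 2))⁻¹ * L2 ψ (Icc (-r) r) := by
  obtain ⟨C, hC⟩ := lemma4_estimate_general hr (ha.of_le ENat.LEInfty.out) ha0 hβ₁.continuous
    hβ₂.continuous hβ₃.continuous (Z := {ζ | ζ.re = s})
    (isClosed_eq Complex.continuous_re continuous_const) (σ := |s|) (fun ζ hζ => hζ ▸ le_rfl)
    (disjoint_left.mpr fun ζ hζ hmem => hs ζ hmem hζ)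
  exact ⟨C, fun γ f φ ψ hf hφ hψ =>
    hC (Complex.mk s γ) rfl f φ ψ (hf.of_le ENat.LEInfty.out) hφ.continuous
      (hψ.of_le ENat.LEInfty.out)⟩
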